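/- arXiv:2103.07837 — 2 statements merged into one kernel-verified Lean document; each statement's English description precedes it below -/
import Mathlib

section
/- Under assumption (A_k), let u be the entropy solution with shock curve x = φ(t) issuing from (1,0): for t ≤ 1, u(t,x) = u_0(y(t,x)); for 1 < t < 1+ε, u(t,x) = u_0(y_-(t,x)) if x < φ(t) and u(t,x) = u_0(y_+(t,x)) if x > φ(t). Then for all (t,x) in a punctured neighborhood of the blowup point (1,0), excluding the shock curve {x = φ(t), t ≥ 1}: |u(t,x) − u(1,0)| = O(|t−1|^{1/(2k)} + |x|^{1/(2k+1)}), |∂_t u(t,x)| = O((|t−1|^{1/(2k)} + |x|^{1/(2k+1)})^{−(2k−1)}), and |∂_x u(t,x)| = O((|t−1|^{1/(2k)} + |x|^{1/(2k+1)})^{−2k}). -/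
open Real Filter Topology Set Asymptotics

/-- Finite-degeneracy assumption (A_k). -/
def AssumptionA (k : ℕ) (g : ℝ → ℝ) : Prop :=
  1 ≤ k ∧
  ContDiff ℝ (2 * k + 2 : ℕ) g ∧
  (∃ M, ∀ x, |g x| ≤ M) ∧
  deriv g 0 = -1 ∧
  (∀ x, -1 ≤ deriv g x) ∧
  ∃ r : ℝ → ℝ, ContDiff ℝ (2 * k + 2 : ℕ) r ∧
    (∀ᶠ x in 𝓝 (0 : ℝ), g x = -x + x ^ (2 * k + 1) + r x) ∧
    ∀ j : ℕ, j ≤ 2 * k + 2 →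
      (fun x => iteratedDeriv j r x) =O[𝓝 (0 : ℝ)] fun x => x ^ (2 * k + 2 - j)

theorem abs_pow_mul_abs_sub_le {n : ℕ} (hn : Even n) (z w : ℝ) :
    |z| ^ n * |w - z| ≤ 2 * |w ^ (n + 1) - z ^ (n + 1)| := by
  have same : ∀ A B : ℝ, 0 ≤ A → 0 ≤ B → B ^ n * |A - B| ≤ 2 * |A ^ (n + 1) - B ^ (n + 1)| := by
    intro A B hA hB
    rcases le_total B A with h | h
    · have h1 : B ^ n ≤ A ^ n := pow_le_pow_left₀ hB h n
      rw [abs_of_nonneg (sub_nonneg.2 h)]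
      have h2 : B ^ n * (A - B) ≤ A ^ (n + 1) - B ^ (n + 1) := by
        rw [pow_succ, pow_succ]; nlinarith
      have h3 := le_abs_self (A ^ (n + 1) - B ^ (n + 1))
      linarith [abs_nonneg (A ^ (n + 1) - B ^ (n + 1))]
    · have h1 : A ^ n ≤ B ^ n := pow_le_pow_left₀ hA h n
      rw [abs_of_nonpos (sub_nonpos.2 h)]
      have h2 : B ^ n * (B - A) ≤ -(A ^ (n + 1) - B ^ (n + 1)) := by
        rw [pow_succ, pow_succ]; nlinarith
      have h3 := neg_le_abs (A ^ (n + 1) - B ^ (n + 1))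
      rw [neg_sub]
      linarith [abs_nonneg (A ^ (n + 1) - B ^ (n + 1))]
  have opp : ∀ A B : ℝ, 0 ≤ A → 0 ≤ B → B ^ n * (A + B) ≤ 2 * (A ^ (n + 1) + B ^ (n + 1)) := by
    intro A B hA hB
    have hAn := pow_nonneg hA n
    have hBn := pow_nonneg hB n
    rw [pow_succ, pow_succ]
    rcases le_total B A with h | h
    · have h1 : B ^ n ≤ A ^ n := pow_le_pow_left₀ hB h n
      nlinarith [mul_nonneg hAn hA, mul_nonneg hBn hB]
    · nlinarith [mul_nonneg hAn hA, mul_nonneg hBn hB]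
  have hodd : Odd (n + 1) := hn.add_one
  have key : ∀ z w : ℝ, 0 ≤ z → |z| ^ n * |w - z| ≤ 2 * |w ^ (n + 1) - z ^ (n + 1)| := by
    intro z w hz
    rw [abs_of_nonneg hz]
    rcases le_total 0 w with hw | hw
    · exact same w z hw hz
    · have h := opp (-w) z (by linarith) hz
      rw [hodd.neg_pow] at h
      rw [abs_of_nonpos (by linarith : w - z ≤ 0)]
      have h3 := neg_le_abs (w ^ (n + 1) - z ^ (n + 1))
      have h4 : z ^ n * -(w - z) = z ^ n * (-w + z) := by ring
      linarith
  rcases le_total 0 z with hz | hz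
  · exact key z w hz
  · have h := key (-z) (-w) (by linarith)
    rw [hodd.neg_pow, hodd.neg_pow, abs_neg] at h
    have e1 : |(-w) - (-z)| = |w - z| := by
      rw [show (-w) - (-z) = -(w - z) by ring, abs_neg]
    have e2 : |(-w ^ (n + 1)) - (-z ^ (n + 1))| = |w ^ (n + 1) - z ^ (n + 1)| := by
      rw [show (-w ^ (n + 1)) - (-z ^ (n + 1)) = -(w ^ (n + 1) - z ^ (n + 1)) by ring, abs_neg]
    rwa [e1, e2] at h

/-- Two characteristic roots between which the Jacobian `1 + t' g'` is nondegenerate depend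
Lipschitz-continuously on `(t, x)`. -/
theorem characteristic_root_dist_le {n : ℕ} (hn : Even n) {g : ℝ → ℝ} (hg : Differentiable ℝ g)
    {t' t x' x z' z : ℝ} (h1 : z' + t' * g z' = x') (h2 : z + t * g z = x)
    (hD : ∀ ξ ∈ uIcc z z', (|t' - 1| + ξ ^ n) / 6 ≤ 1 + t' * deriv g ξ) :
    (|t' - 1| + |z| ^ n) * |z' - z| ≤ 12 * (n + 1) * (|x' - x| + |t' - t| * |g z|) := by
  have hn1 : (0 : ℝ) < n + 1 := by positivity
  set P : ℝ → ℝ := fun w => w + t' * g w - (|t' - 1| * w + w ^ (n + 1) / (n + 1)) / 6 with hP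
  have hPd : ∀ w, HasDerivAt P (1 + t' * deriv g w - (|t' - 1| + w ^ n) / 6) w := by
    intro w
    have ha := (hasDerivAt_id w).add ((hg w).hasDerivAt.const_mul t')
    have hb := (((hasDerivAt_id w).const_mul |t' - 1|).add
      ((hasDerivAt_pow (n + 1) w).div_const ((n : ℝ) + 1))).div_const 6
    refine (ha.sub hb).congr_deriv ?_
    push_cast [Nat.add_sub_cancel]
    field_simp
  have hmono : MonotoneOn P (uIcc z z') := by
    apply monotoneOn_of_deriv_nonneg (convex_uIcc z z')
    · exact fun w _ => (hPd w).continuousAt.continuousWithinAt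
    · exact fun w _ => (hPd w).differentiableAt.differentiableWithinAt
    · intro w hw
      rw [(hPd w).deriv]
      linarith [hD w (interior_subset hw)]
  have hpow := abs_pow_mul_abs_sub_le hn z z'
  have hodd : Odd (n + 1) := hn.add_one
  -- the increment of the characteristic map at time `t'` controls the distance of the roots
  have main : (|t' - 1| * |z' - z| + |z' ^ (n + 1) - z ^ (n + 1)| / (n + 1)) / 6
      ≤ |(z' + t' * g z') - (z + t' * g z)| := by
    rcases le_total z z' with h | h
    · have hm := hmono left_mem_uIcc right_mem_uIcc h
      have hp : z ^ (n + 1) ≤ z' ^ (n + 1) := hodd.strictMono_pow.monotone h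
      rw [abs_of_nonneg (sub_nonneg.2 h), abs_of_nonneg (sub_nonneg.2 hp)]
      refine le_trans ?_ (le_abs_self _)
      simp only [hP] at hm
      have : (z' ^ (n + 1) - z ^ (n + 1)) / ((n : ℝ) + 1)
        = z' ^ (n + 1) / ((n : ℝ) + 1) - z ^ (n + 1) / ((n : ℝ) + 1) := sub_div _ _ _
      rw [this]
      linarith
    · have hm := hmono right_mem_uIcc left_mem_uIcc h
      have hp : z' ^ (n + 1) ≤ z ^ (n + 1) := hodd.strictMono_pow.monotone h
      rw [abs_of_nonpos (sub_nonpos.2 h), abs_of_nonpos (sub_nonpos.2 hp)]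
      refine le_trans ?_ (neg_le_abs _)
      simp only [hP] at hm
      have : -(z' ^ (n + 1) - z ^ (n + 1)) / ((n : ℝ) + 1)
        = z ^ (n + 1) / ((n : ℝ) + 1) - z' ^ (n + 1) / ((n : ℝ) + 1) := by ring
      rw [this]
      linarith
  have e : (z' + t' * g z') - (z + t' * g z) = (x' - x) - (t' - t) * g z := by
    rw [← h1, ← h2]; ring
  rw [e] at main
  have tri : |(x' - x) - (t' - t) * g z| ≤ |x' - x| + |t' - t| * |g z| := by
    rw [← abs_mul]; exact abs_sub _ _
  have h6 := main.trans tri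
  rw [div_le_iff₀ (by norm_num)] at h6
  have h7 : |z| ^ n * |z' - z| / (n + 1) ≤ 2 * (|z' ^ (n + 1) - z ^ (n + 1)| / (n + 1)) := by
    rw [← mul_div_assoc]
    exact div_le_div_of_nonneg_right hpow hn1.le
  rw [div_le_iff₀ hn1] at h7
  have h8 : 0 ≤ |t' - 1| * |z' - z| := by positivity
  have hn0 : (0 : ℝ) ≤ n := by positivity
  nlinarith [mul_le_mul_of_nonneg_left h6 hn1.le, mul_nonneg hn0 h8]

theorem abs_deriv_le_of_tendsto_left {v K : ℝ → ℝ} {t : ℝ} (hK : ContinuousAt K t)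
    (hK0 : 0 ≤ K t) (h : ∀ᶠ s in 𝓝[<] t, |v s - v t| ≤ K s * |s - t|) : |deriv v t| ≤ K t := by
  by_cases hd : DifferentiableAt ℝ v t
  · have h1 : Tendsto (slope v t) (𝓝[<] t) (𝓝 (deriv v t)) :=
      (hasDerivAt_iff_tendsto_slope.1 hd.hasDerivAt).mono_left
        (nhdsWithin_mono _ fun s hs => ne_of_lt hs)
    refine le_of_tendsto_of_tendsto h1.abs (hK.tendsto.mono_left nhdsWithin_le_nhds) ?_
    filter_upwards [h, self_mem_nhdsWithin] with s hs hst
    have hst' : s < t := hst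
    have : 0 < |s - t| := abs_pos.2 (sub_ne_zero.2 hst'.ne)
    rw [slope_def_field, abs_div, div_le_iff₀ this]
    exact hs
  · rw [deriv_zero_of_not_differentiableAt hd, abs_zero]; exact hK0

/-- Derivative bounds for `u = u₀(z)` on a region `Ω` of space-time where the characteristic roots
`z` are chosen in a branch `B` with nondegenerate Jacobian. -/
theorem abs_deriv_le_of_branch {n : ℕ} (hn : Even n) {g u0 : ℝ → ℝ} {u : ℝ → ℝ → ℝ}
    (hg : Differentiable ℝ g) {L η : ℝ} (hL : 0 ≤ L)
    (hLip : ∀ z w, |z| < η → |w| < η → |u0 z - u0 w| ≤ L * |z - w|)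
    {B Ω : Set (ℝ × ℝ)}
    (hB : ∀ t' z' t z, (t', z') ∈ B → (t, z) ∈ B → t' ≤ t → ∀ ξ ∈ uIcc z z',
      (|t' - 1| + ξ ^ n) / 6 ≤ 1 + t' * deriv g ξ)
    (hroot : ∀ t x, (t, x) ∈ Ω → ∃ z, |z| < η ∧ (t, z) ∈ B ∧ z + t * g z = x ∧ u t x = u0 z)
    {t x : ℝ} (hΩ : (t, x) ∈ Ω) (hΩx : ∀ᶠ x' in 𝓝 x, (t, x') ∈ Ω)
    (hΩt : ∀ᶠ t' in 𝓝[<] t, (t', x) ∈ Ω) (hne : t = 1 → x ≠ g 0) :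
    ∃ z, |z| < η ∧ z + t * g z = x ∧ u t x = u0 z ∧ 0 < |t - 1| + |z| ^ n ∧
      |deriv (fun s => u s x) t| ≤ 12 * (n + 1) * L * |g z| / (|t - 1| + |z| ^ n) ∧
      |deriv (fun y => u t y) x| ≤ 12 * (n + 1) * L / (|t - 1| + |z| ^ n) := by
  obtain ⟨z, hzη, hzB, hzx, hzu⟩ := hroot t x hΩ
  have hpos : 0 < |t - 1| + |z| ^ n := by
    by_cases ht : t = 1
    · have hz : z ≠ 0 := by
        rintro rfl
        exact hne ht (by rw [← hzx, ht]; ring)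
      have := pow_pos (abs_pos.2 hz) n
      positivity
    · have := abs_pos.2 (sub_ne_zero.2 ht)
      positivity
  refine ⟨z, hzη, hzx, hzu, hpos, ?_, ?_⟩
  · refine abs_deriv_le_of_tendsto_left
      (K := fun s => 12 * (n + 1) * L * |g z| / (|s - 1| + |z| ^ n)) ?_ (by positivity) ?_
    · refine ContinuousAt.div (by fun_prop) (by fun_prop) hpos.ne'
    · have hev : ∀ᶠ s in 𝓝[<] t, 0 < |s - 1| + |z| ^ n :=
        nhdsWithin_le_nhds (ContinuousAt.eventually_lt (by fun_prop) (by fun_prop) hpos)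
      filter_upwards [hΩt, hev, self_mem_nhdsWithin] with s hs hsp hst
      obtain ⟨z', hzη', hzB', hzx', hzu'⟩ := hroot s x hs
      have h := characteristic_root_dist_le hn hg hzx' hzx
        (hB s z' t z hzB' hzB (le_of_lt hst))
      rw [sub_self, abs_zero, zero_add] at h
      rw [hzu', hzu]
      refine (hLip _ _ hzη' hzη).trans ?_
      rw [div_mul_eq_mul_div, le_div_iff₀ hsp]
      nlinarith [mul_le_mul_of_nonneg_left h hL]
  · rw [← Real.norm_eq_abs]
    refine norm_deriv_le_of_lip' (by positivity) ?_
    filter_upwards [hΩx] with x' hx'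
    obtain ⟨z', hzη', hzB', hzx', hzu'⟩ := hroot t x' hx'
    have h := characteristic_root_dist_le hn hg hzx' hzx (hB t z' t z hzB' hzB le_rfl)
    rw [sub_self, abs_zero, zero_mul, add_zero] at h
    rw [hzu', hzu, Real.norm_eq_abs, Real.norm_eq_abs]
    refine (hLip _ _ hzη' hzη).trans ?_
    rw [div_mul_eq_mul_div, le_div_iff₀ hpos]
    nlinarith [mul_le_mul_of_nonneg_left h hL]

theorem AssumptionA.eventually_abs_remainder_le {k : ℕ} {g : ℝ → ℝ} (hA : AssumptionA k g) {e : ℝ}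
    (he : 0 < e) : ∀ᶠ z in 𝓝 (0 : ℝ),
      |g z + z - z ^ (2 * k + 1)| ≤ e * |z| ^ (2 * k + 1) ∧
      |deriv g z + 1 - (2 * k + 1) * z ^ (2 * k)| ≤ e * |z| ^ (2 * k) := by
  obtain ⟨-, -, -, -, -, r, hr, hgr, hO⟩ := hA
  have small : ∀ (v : ℝ → ℝ) (m : ℕ), v =O[𝓝 (0 : ℝ)] (fun x => x ^ (m + 1)) →
      ∀ᶠ z in 𝓝 (0 : ℝ), |v z| ≤ e * |z| ^ m := by
    intro v m hv
    have h1 : (fun x : ℝ => x ^ (m + 1)) =o[𝓝 (0 : ℝ)] fun x => x ^ m :=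
      isLittleO_pow_pow (Nat.lt_succ_self m)
    filter_upwards [(hv.trans_isLittleO h1).def he] with z hz
    simpa [Real.norm_eq_abs, abs_pow] using hz
  have h0 := small _ (2 * k + 1) (by simpa using hO 0 (by omega))
  have h1 := small (deriv r) (2 * k) (by simpa using hO 1 (by omega))
  have hdr : Differentiable ℝ r := hr.differentiable (by simp)
  filter_upwards [h0, h1, hgr, hgr.eventually_nhds] with z hz0 hz1 hzg hzn
  constructor
  · rw [hzg]
    convert hz0 using 2
    ring
  · have hd : HasDerivAt (fun x => -x + x ^ (2 * k + 1) + r x)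
        (-1 + (2 * k + 1) * z ^ (2 * k) + deriv r z) z := by
      refine (((hasDerivAt_id z).neg.add (hasDerivAt_pow (2 * k + 1) z)).add
        (hdr z).hasDerivAt).congr_deriv ?_
      push_cast [Nat.add_sub_cancel]
      ring
    have : deriv g z = -1 + (2 * k + 1) * z ^ (2 * k) + deriv r z := by
      rw [EventuallyEq.deriv_eq hzn, hd.deriv]
    rw [this]
    convert hz1 using 2
    ring

/-- The Rankine–Hugoniot speed between `a` and `b` is close to `-(a + b) / 2`. -/
theorem rankineHugoniot_speed_le {g U F : ℝ → ℝ} {u1 ε a b : ℝ} (hu1 : u1 ≠ 0) (hε : 0 < ε)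
    (hε2 : ε ≤ 1 / 2) (ha : a < 0) (hb : 0 < b)
    (hU : ∀ z, DifferentiableAt ℝ U z) (hF : ∀ z, HasDerivAt F (g z * deriv U z) z)
    (hU1 : ∀ z ∈ Icc a b, |deriv U z - u1| ≤ ε * |u1|)
    (hg : ∀ z ∈ Icc a b, |g z + z| ≤ ε * |z|) :
    (-(2 * ε * (b - a)) ≤ a + b → (F b - F a) / (U b - U a) ≤ 8 * ε * (b - a)) ∧
    (a + b ≤ 2 * ε * (b - a) → -(8 * ε * (b - a)) ≤ (F b - F a) / (U b - U a)) := by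
  have hab : a ≤ b := by linarith
  have hu1p : 0 < |u1| := abs_pos.2 hu1
  have hba : 0 < b - a := by linarith
  have hG : |(F b + u1 * b ^ 2 / 2) - (F a + u1 * a ^ 2 / 2)| ≤ 3 * ε * |u1| * (b - a) * |b - a| := by
    have := Convex.norm_image_sub_le_of_norm_hasDerivWithin_le (𝕜 := ℝ)
      (f := fun z => F z + u1 * z ^ 2 / 2) (f' := fun z => g z * deriv U z + u1 * z)
      (s := Icc a b) (C := 3 * ε * |u1| * (b - a)) (x := a) (y := b) ?_ ?_ (convex_Icc a b)
      (left_mem_Icc.2 hab) (right_mem_Icc.2 hab)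
    · simpa [Real.norm_eq_abs] using this
    · intro z _
      have h1 := (hF z).add (((hasDerivAt_pow 2 z).const_mul u1).div_const 2)
      exact (h1.congr_deriv (by norm_num; ring)).hasDerivWithinAt
    · intro z hz
      have h1 := hU1 z hz
      have h2 := hg z hz
      have hzab : |z| ≤ b - a := abs_le.2 ⟨by linarith [hz.1], by linarith [hz.2]⟩
      have h3 : |deriv U z| ≤ 2 * |u1| := by
        have := abs_sub_abs_le_abs_sub (deriv U z) u1
        nlinarith
      rw [Real.norm_eq_abs]
      have e1 : g z * deriv U z + u1 * z = (g z + z) * deriv U z - z * (deriv U z - u1) := by ring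
      rw [e1]
      calc |(g z + z) * deriv U z - z * (deriv U z - u1)|
          ≤ |g z + z| * |deriv U z| + |z| * |deriv U z - u1| := by
            rw [← abs_mul, ← abs_mul]; exact abs_sub _ _
        _ ≤ (ε * |z|) * (2 * |u1|) + |z| * (ε * |u1|) := by gcongr
        _ = 3 * ε * |u1| * |z| := by ring
        _ ≤ 3 * ε * |u1| * (b - a) := by gcongr
  have hUd : |(U b - u1 * b) - (U a - u1 * a)| ≤ ε * |u1| * |b - a| := by
    have := Convex.norm_image_sub_le_of_norm_hasDerivWithin_le (𝕜 := ℝ)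
      (f := fun z => U z - u1 * z) (f' := fun z => deriv U z - u1)
      (s := Icc a b) (C := ε * |u1|) (x := a) (y := b) ?_ ?_ (convex_Icc a b)
      (left_mem_Icc.2 hab) (right_mem_Icc.2 hab)
    · simpa [Real.norm_eq_abs] using this
    · intro z _
      have h1 := (hU z).hasDerivAt.sub ((hasDerivAt_id z).const_mul u1)
      exact (h1.congr_deriv (by ring)).hasDerivWithinAt
    · exact hU1
  rw [abs_of_pos hba] at hG hUd
  obtain ⟨p, hp⟩ : ∃ p, U b - U a = u1 * (b - a) * (1 + p) := by
    refine ⟨(U b - U a) / (u1 * (b - a)) - 1, ?_⟩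
    field_simp
    ring
  obtain ⟨q, hq⟩ : ∃ q, F b - F a = u1 * (b - a) * (-(a + b) / 2 + q) := by
    refine ⟨(F b - F a) / (u1 * (b - a)) + (a + b) / 2, ?_⟩
    field_simp
    ring
  have hpa : |p| ≤ ε := by
    have e1 : (U b - u1 * b) - (U a - u1 * a) = u1 * (b - a) * p := by linear_combination hp
    rw [e1, abs_mul, abs_mul, abs_of_pos hba] at hUd
    have : |u1| * (b - a) * |p| ≤ |u1| * (b - a) * ε := by linarith
    exact le_of_mul_le_mul_left this (by positivity)
  have hqa : |q| ≤ 3 * ε * (b - a) := by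
    have e1 : (F b + u1 * b ^ 2 / 2) - (F a + u1 * a ^ 2 / 2) = u1 * (b - a) * q := by
      linear_combination hq
    rw [e1, abs_mul, abs_mul, abs_of_pos hba] at hG
    have : |u1| * (b - a) * |q| ≤ |u1| * (b - a) * (3 * ε * (b - a)) := by linarith
    exact le_of_mul_le_mul_left this (by positivity)
  have hp1 : 1 / 2 ≤ 1 + p := by linarith [(abs_le.1 hpa).1]
  have hs : (F b - F a) / (U b - U a) = (-(a + b) / 2 + q) / (1 + p) := by
    rw [hp, hq, mul_div_mul_left _ _ (by positivity)]
  have hεb : 0 < ε * (b - a) := by positivity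
  rw [hs]
  constructor
  · intro h
    rw [div_le_iff₀ (by linarith)]
    nlinarith [(abs_le.1 hqa).2]
  · intro h
    rw [le_div_iff₀ (by linarith)]
    nlinarith [(abs_le.1 hqa).1]

/-- A curve issuing from `0` whose speed is at most `δ (t - 1)^p` wherever it is positive. -/
theorem le_mul_rpow_of_deriv_le_of_pos {φ s : ℝ → ℝ} {ε δ p : ℝ} (hδ : 0 ≤ δ) (hp : 0 ≤ p)
    (hφ1 : φ 1 = 0) (hφc : ContinuousOn φ (Ico (1 : ℝ) (1 + ε)))
    (hd : ∀ t ∈ Ioo (1 : ℝ) (1 + ε), HasDerivAt φ (s t) t)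
    (hs : ∀ t ∈ Ioo (1 : ℝ) (1 + ε), 0 < φ t → s t ≤ δ * (t - 1) ^ p)
    {t : ℝ} (ht : t ∈ Ioo (1 : ℝ) (1 + ε)) : φ t ≤ δ * (t - 1) ^ p * (t - 1) := by
  have hτ : 0 < t - 1 := sub_pos.2 ht.1
  have hR : 0 ≤ δ * (t - 1) ^ p := by positivity
  rcases le_or_gt (φ t) 0 with h0 | h0
  · exact h0.trans (by positivity)
  have hsub : Icc 1 t ⊆ Ico (1 : ℝ) (1 + ε) := fun x hx => ⟨hx.1, hx.2.trans_lt ht.2⟩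
  have hcomp : IsCompact (Icc 1 t ∩ φ ⁻¹' Iic 0) :=
    isCompact_Icc.of_isClosed_subset
      ((hφc.mono hsub).preimage_isClosed_of_isClosed isClosed_Icc isClosed_Iic) inter_subset_left
  obtain ⟨t1, ⟨⟨h1t1, ht1t⟩, hφt1⟩, hmax⟩ :=
    hcomp.exists_isGreatest ⟨1, ⟨le_rfl, ht.1.le⟩, by simp [hφ1]⟩
  have hφt1' : φ t1 ≤ 0 := hφt1
  have hlt : t1 < t := by
    rcases ht1t.lt_or_eq with h | h
    · exact h
    · rw [h] at hφt1'; linarith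
  have hpos : ∀ x ∈ Ioc t1 t, 0 < φ x := by
    intro x hx
    by_contra hcon
    have : x ≤ t1 := hmax ⟨⟨h1t1.trans hx.1.le, hx.2⟩, not_lt.1 hcon⟩
    linarith [hx.1]
  obtain ⟨c, hc, hcs⟩ := exists_hasDerivAt_eq_slope φ s hlt
    (hφc.mono fun x hx => hsub ⟨h1t1.trans hx.1, hx.2⟩)
    (fun x hx => hd x ⟨h1t1.trans_lt hx.1, hx.2.trans ht.2⟩)
  have hc1 : 1 < c := h1t1.trans_lt hc.1
  have h1 := hs c ⟨hc1, hc.2.trans ht.2⟩ (hpos c ⟨hc.1, hc.2.le⟩)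
  have h2 : (c - 1) ^ p ≤ (t - 1) ^ p :=
    Real.rpow_le_rpow (by linarith) (by linarith [hc.2]) hp
  have h3 : (φ t - φ t1) / (t - t1) ≤ δ * (t - 1) ^ p := by
    rw [← hcs]; exact h1.trans (by gcongr)
  rw [div_le_iff₀ (by linarith)] at h3
  nlinarith

/-- If both outer roots `b` and `-m` lie over a point `x ≥ 0`, then `m` is at most slightly larger
than `b`. -/
theorem left_root_le_of_nonneg {n : ℕ} (hn : n ≠ 0) {b m hb hm τ t ε e : ℝ} (hb0 : 0 < b)
    (hm0 : 0 < m) (ht : 0 < t) (hε : 0 < ε) (hε1 : ε ≤ 1) (he : 4 * e ≤ ε)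
    (hbb : hb ≤ (1 + e) * b ^ (n + 1)) (hmm : (1 - e) * m ^ (n + 1) ≤ hm)
    (h1 : τ * b ≤ t * hb) (h2 : t * hm ≤ τ * m) : m ≤ (1 + ε) * b := by
  by_contra hcon
  push Not at hcon
  have hbn : 0 < b ^ n := by positivity
  have hτ1 : τ ≤ t * ((1 + e) * b ^ n) := by
    have : τ * b ≤ t * ((1 + e) * b ^ n) * b := by
      refine h1.trans ((mul_le_mul_of_nonneg_left hbb ht.le).trans (le_of_eq ?_)); ring
    exact le_of_mul_le_mul_right this hb0
  have hτ2 : t * ((1 - e) * m ^ n) ≤ τ := by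
    have : t * ((1 - e) * m ^ n) * m ≤ τ * m := by
      refine le_trans (le_of_eq ?_) ((mul_le_mul_of_nonneg_left hmm ht.le).trans h2); ring
    exact le_of_mul_le_mul_right this hm0
  have h3 : (1 - e) * m ^ n ≤ (1 + e) * b ^ n := le_of_mul_le_mul_left (hτ2.trans hτ1) ht
  have h4 : (1 + ε) * b ^ n ≤ m ^ n := by
    have h5 : ((1 + ε) * b) ^ n ≤ m ^ n := pow_le_pow_left₀ (by positivity) hcon.le n
    have h6 : 1 + ε ≤ (1 + ε) ^ n := le_self_pow₀ (by linarith) hn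
    rw [mul_pow] at h5
    exact (mul_le_mul_of_nonneg_right h6 hbn.le).trans h5
  have h7 : (1 - e) * ((1 + ε) * b ^ n) ≤ (1 - e) * m ^ n :=
    mul_le_mul_of_nonneg_left h4 (by linarith)
  have h8 : (1 - e) * (1 + ε) ≤ 1 + e := by
    have : ((1 - e) * (1 + ε)) * b ^ n ≤ (1 + e) * b ^ n := by linarith
    exact le_of_mul_le_mul_right this hbn
  nlinarith

theorem le_four_mul_of_roots {n : ℕ} (hn : n ≠ 0) {b m hb hm σ t : ℝ} (hb0 : 0 < b) (hm0 : 0 < m)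
    (hσ : 0 ≤ σ) (ht : 1 ≤ t) (hbb : b ^ (n + 1) ≤ 2 * hb) (hmm : m ^ (n + 1) ≤ 2 * hm)
    (h : σ ^ n * (b + m) = t * (hb + hm)) : b ≤ 4 * σ ∧ m ≤ 4 * σ := by
  have aux : ∀ {b m hb hm : ℝ}, 0 < b → 0 < m → b ^ (n + 1) ≤ 2 * hb → m ^ (n + 1) ≤ 2 * hm →
      σ ^ n * (b + m) = t * (hb + hm) → m ≤ b → b ≤ 4 * σ := by
    intro b m hb hm hb0 hm0 hbb hmm h hmb
    have hbp : 0 < b ^ (n + 1) := by positivity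
    have hmp : 0 < m ^ (n + 1) := by positivity
    have hσn : 0 ≤ σ ^ n := by positivity
    have h1 : b ^ n * b ≤ 4 * σ ^ n * b := by
      rw [← pow_succ]; nlinarith
    have h2 : b ^ n ≤ 4 * σ ^ n := le_of_mul_le_mul_right h1 hb0
    have h3 : (4 : ℝ) ≤ 4 ^ n := le_self_pow₀ (by norm_num) hn
    refine le_of_pow_le_pow_left₀ hn (by positivity) ?_
    rw [mul_pow]
    nlinarith
  rcases le_total m b with hmb | hbm
  · have := aux hb0 hm0 hbb hmm h hmb
    exact ⟨this, hmb.trans this⟩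
  · have := aux hm0 hb0 hmm hbb (by linarith) hbm
    exact ⟨hbm.trans this, this⟩

/-- A root over a point `x ≥ -δ σ^(n+1)` beyond the fold stays quantitatively away from it. -/
theorem pow_root_ge_of_shock {n : ℕ} (hn : n ≠ 0) {b hb x σ t δ : ℝ} (hb0 : 0 < b) (hσ : 0 ≤ σ)
    (ht : 1 ≤ t) (ht2 : t ≤ 2) (hδ0 : 0 ≤ δ) (hδ : δ * (2 * (n + 2)) ≤ 1 / 8)
    (hD : σ ^ n ≤ t * ((n + 2) * b ^ n)) (hx : -(δ * σ * σ ^ n) ≤ x)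
    (hxb : x = t * hb - σ ^ n * b) (hbb : hb ≤ 9 / 8 * b ^ (n + 1)) :
    3 / 4 * σ ^ n ≤ t * b ^ n := by
  have hbn : 0 < b ^ n := by positivity
  have hσn : 0 ≤ σ ^ n := by positivity
  have hn0 : (0 : ℝ) ≤ n := by positivity
  have h1 : σ ≤ 2 * (n + 2) * b := by
    refine le_of_pow_le_pow_left₀ hn (by positivity) ?_
    rw [mul_pow]
    have h2 : 2 * ((n : ℝ) + 2) ≤ (2 * (n + 2)) ^ n := le_self_pow₀ (by linarith) hn
    have h3 : 2 * ((n : ℝ) + 2) * b ^ n ≤ (2 * (n + 2)) ^ n * b ^ n := by gcongr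
    have h4 : t * (((n : ℝ) + 2) * b ^ n) ≤ 2 * (((n : ℝ) + 2) * b ^ n) := by gcongr
    linarith
  have h2 : δ * σ ≤ b / 8 := by
    calc δ * σ ≤ δ * (2 * (n + 2) * b) := by gcongr
      _ = δ * (2 * (n + 2)) * b := by ring
      _ ≤ 1 / 8 * b := by gcongr
      _ = b / 8 := by ring
  have h3 : δ * σ * σ ^ n ≤ b / 8 * σ ^ n := by gcongr
  have h4 : t * hb ≤ t * (9 / 8 * b ^ (n + 1)) := by gcongr
  rw [pow_succ] at h4
  have h5 : 7 / 8 * σ ^ n * b ≤ t * (9 / 8 * b ^ n) * b := by linarith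
  have h6 := le_of_mul_le_mul_right h5 hb0
  linarith

theorem abs_root_le {n : ℕ} (hn : n ≠ 0) {t x z hz σ X : ℝ} (ht : 1 / 2 ≤ t) (hσ : 0 ≤ σ)
    (hX : 0 ≤ X) (hσn : σ ^ n = |t - 1|) (hXn : X ^ (n + 1) = |x|)
    (hx : x = t * hz - (t - 1) * z) (hh : 3 / 4 * |z| ^ (n + 1) ≤ |hz|) : |z| ≤ 8 * (σ + X) := by
  rcases le_total (|z| ^ n) (8 * σ ^ n) with h | h
  · have h1 : |z| ≤ 8 * σ := by
      refine le_of_pow_le_pow_left₀ hn (by positivity) (h.trans ?_)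
      rw [mul_pow]
      have : (8 : ℝ) ≤ 8 ^ n := le_self_pow₀ (by norm_num) hn
      gcongr
    linarith
  · have h0 : t * |hz| ≤ |x| + |t - 1| * |z| := by
      have e1 : t * hz = x + (t - 1) * z := by rw [hx]; ring
      have ht0 : (0 : ℝ) ≤ t := by linarith
      rw [← abs_mul, show t * |hz| = |t * hz| by rw [abs_mul, abs_of_nonneg ht0], e1]
      exact abs_add_le _ _
    have h1 : 1 / 2 * |hz| ≤ t * |hz| := by gcongr
    have h2 : |t - 1| * |z| ≤ |z| ^ (n + 1) / 8 := by
      rw [← hσn, pow_succ]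
      nlinarith [abs_nonneg z]
    have h3 : |z| ^ (n + 1) ≤ 8 * X ^ (n + 1) := by
      rw [hXn]; nlinarith [abs_nonneg x, pow_nonneg (abs_nonneg z) (n + 1)]
    have h4 : |z| ≤ 8 * X := by
      refine le_of_pow_le_pow_left₀ n.succ_ne_zero (by positivity) (h3.trans ?_)
      rw [mul_pow]
      have : (8 : ℝ) ≤ 8 ^ (n + 1) := le_self_pow₀ (by norm_num) n.succ_ne_zero
      gcongr
    linarith

theorem scale_pow_le {n : ℕ} {t x z hz σ X : ℝ} (ht0 : 0 ≤ t) (ht : t ≤ 2)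
    (hσ : 0 ≤ σ) (hX : 0 ≤ X) (hσn : σ ^ n = |t - 1|) (hXn : X ^ (n + 1) = |x|)
    (hx : x = t * hz - (t - 1) * z) (hh : |hz| ≤ 2 * |z| ^ (n + 1)) :
    (σ + X) ^ n ≤ 6 ^ n * (|t - 1| + |z| ^ n) := by
  set s := max σ |z| with hs
  have hs0 : 0 ≤ s := hσ.trans (le_max_left _ _)
  have hσs : σ ≤ s := le_max_left _ _
  have hzs : |z| ≤ s := le_max_right _ _
  have h1 : |x| ≤ 5 * s ^ (n + 1) := by
    have h2 : |x| ≤ t * |hz| + |t - 1| * |z| := by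
      rw [hx, ← abs_mul (t - 1)]
      refine (abs_sub _ _).trans ?_
      rw [abs_mul t, abs_of_nonneg ht0]
    have h3 : t * |hz| ≤ 2 * (2 * s ^ (n + 1)) := by
      calc t * |hz| ≤ 2 * (2 * |z| ^ (n + 1)) := by gcongr
        _ ≤ _ := by gcongr
    have h4 : |t - 1| * |z| ≤ s ^ (n + 1) := by
      rw [← hσn, pow_succ]; gcongr
    linarith
  have h2 : X ≤ 5 * s := by
    refine le_of_pow_le_pow_left₀ n.succ_ne_zero (by positivity) ?_
    rw [hXn, mul_pow]
    have : (5 : ℝ) ≤ 5 ^ (n + 1) := le_self_pow₀ (by norm_num) n.succ_ne_zero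
    refine h1.trans ?_
    gcongr
  have h3 : (σ + X) ^ n ≤ (6 * s) ^ n := by
    gcongr
    linarith
  rw [mul_pow] at h3
  refine h3.trans ?_
  gcongr
  have : s ^ n = σ ^ n ∨ s ^ n = |z| ^ n := by
    rcases max_choice σ |z| with h | h
    · left; rw [hs, h]
    · right; rw [hs, h]
  rw [← hσn]
  rcases this with h | h <;> rw [h]
  · linarith [pow_nonneg (abs_nonneg z) n]
  · linarith [pow_nonneg hσ n]

/-- Quantitative form of the degenerate profile `g z ≈ -z + z ^ (n + 1)` on `[-η, η]`. -/
structure LocalProfile (n : ℕ) (g : ℝ → ℝ) (e η : ℝ) : Prop where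
  pos : 0 < η
  even : Even n
  ne_zero : n ≠ 0
  diff : Differentiable ℝ g
  neg_one_le_deriv : ∀ z, -1 ≤ deriv g z
  remainder : ∀ z, |z| ≤ η → |g z + z - z ^ (n + 1)| ≤ e * |z| ^ (n + 1)
  jacobian : ∀ z, |z| ≤ η → 2 * z ^ n ≤ deriv g z + 1 ∧ deriv g z + 1 ≤ (n + 2) * z ^ n

theorem deriv_neg_comp_neg (g : ℝ → ℝ) (z : ℝ) : deriv (fun w => -g (-w)) z = deriv g (-z) := by
  rw [deriv.fun_neg, deriv_comp_neg, neg_neg]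

namespace LocalProfile

variable {n : ℕ} {g : ℝ → ℝ} {e η M : ℝ}

theorem reflect (h : LocalProfile n g e η) : LocalProfile n (fun z => -g (-z)) e η where
  pos := h.pos
  even := h.even
  ne_zero := h.ne_zero
  diff := (h.diff.comp differentiable_neg).neg
  neg_one_le_deriv z := by rw [deriv_neg_comp_neg]; exact h.neg_one_le_deriv _
  remainder z hz := by
    have := h.remainder (-z) (by rwa [abs_neg])
    rw [h.even.add_one.neg_pow, abs_neg z] at this
    rw [← abs_neg]
    convert this using 2
    ring
  jacobian z hz := by
    have := h.jacobian (-z) (by rwa [abs_neg])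
    rw [h.even.neg_pow] at this
    rwa [deriv_neg_comp_neg]

theorem right_bounds (h : LocalProfile n g e η) {b : ℝ} (hb : 0 < b) (hbη : b ≤ η) :
    (1 - e) * b ^ (n + 1) ≤ g b + b ∧ g b + b ≤ (1 + e) * b ^ (n + 1) := by
  have := abs_le.1 (h.remainder b (by rwa [abs_of_pos hb]))
  rw [abs_of_pos hb] at this
  constructor <;> linarith [this.1, this.2]

theorem left_bounds (h : LocalProfile n g e η) {a : ℝ} (ha : a < 0) (haη : -η ≤ a) :
    (1 - e) * (-a) ^ (n + 1) ≤ -(g a + a) ∧ -(g a + a) ≤ (1 + e) * (-a) ^ (n + 1) := by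
  have := h.reflect.right_bounds (b := -a) (by linarith) (by linarith)
  simp only [neg_neg] at this
  constructor <;> linarith [this.1, this.2]

theorem monotone_add (h : LocalProfile n g e η) : Monotone fun z => z + g z := by
  refine monotone_of_deriv_nonneg (f := fun z => z + g z) (differentiable_id.add h.diff) ?_
  intro z
  have : HasDerivAt (fun z => z + g z) (1 + deriv g z) z :=
    (hasDerivAt_id z).add (h.diff z).hasDerivAt
  rw [this.deriv]
  linarith [h.neg_one_le_deriv z]

theorem lt_of_le (h : LocalProfile n g e η) (hM : ∀ z, |g z| ≤ M) {t x z : ℝ}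
    (hsmall : |t - 1| * M + |x| < (1 - e) * η ^ (n + 1)) (hz : η ≤ z) : x < z + t * g z := by
  have h1 : η + g η ≤ z + g z := h.monotone_add hz
  have h2 := (h.right_bounds h.pos le_rfl).1
  have h3 : |(t - 1) * g z| ≤ |t - 1| * M := by
    rw [abs_mul]; exact mul_le_mul_of_nonneg_left (hM z) (abs_nonneg _)
  have h4 := (abs_le.1 h3).1
  have h5 := le_abs_self x
  linarith

theorem root_lt (h : LocalProfile n g e η) (hM : ∀ z, |g z| ≤ M) {t x z : ℝ}
    (hsmall : |t - 1| * M + |x| < (1 - e) * η ^ (n + 1)) (hz : z + t * g z = x) : z < η := by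
  by_contra hcon
  linarith [h.lt_of_le hM hsmall (not_lt.1 hcon)]

theorem neg_lt_root (h : LocalProfile n g e η) (hM : ∀ z, |g z| ≤ M) {t x z : ℝ}
    (hsmall : |t - 1| * M + |x| < (1 - e) * η ^ (n + 1)) (hz : z + t * g z = x) : -η < z := by
  have := h.reflect.root_lt (M := M) (fun z => by rw [abs_neg]; exact hM _) (t := t) (x := -x)
    (z := -z) (by rwa [abs_neg]) (by rw [neg_neg]; linarith)
  linarith

theorem exists_root_gt (h : LocalProfile n g e η) (hM : ∀ z, |g z| ≤ M) {t x b : ℝ}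
    (hsmall : |t - 1| * M + |x| < (1 - e) * η ^ (n + 1)) (hb : b + t * g b < x) :
    ∃ z, b < z ∧ z < η ∧ z + t * g z = x := by
  have hcont : Continuous fun z => z + t * g z :=
    continuous_id.add (continuous_const.mul h.diff.continuous)
  obtain ⟨z, hz, hzx⟩ := intermediate_value_Ioo (le_max_left b η) hcont.continuousOn
    ⟨hb, h.lt_of_le hM hsmall (le_max_right b η)⟩
  exact ⟨z, hz.1, h.root_lt hM hsmall hzx, hzx⟩

theorem exists_root_lt (h : LocalProfile n g e η) (hM : ∀ z, |g z| ≤ M) {t x a : ℝ}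
    (hsmall : |t - 1| * M + |x| < (1 - e) * η ^ (n + 1)) (ha : x < a + t * g a) :
    ∃ z, z < a ∧ -η < z ∧ z + t * g z = x := by
  obtain ⟨z, h1, h2, h3⟩ := h.reflect.exists_root_gt (M := M)
    (fun z => by rw [abs_neg]; exact hM _) (t := t) (x := -x) (b := -a)
    (by rwa [abs_neg]) (by rw [neg_neg]; linarith)
  exact ⟨-z, by linarith, by linarith, by linarith⟩

theorem jacobian_ge_of_le_one (h : LocalProfile n g e η) {t ξ : ℝ} (ht : 1 / 2 ≤ t) (ht1 : t ≤ 1)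
    (hξ : |ξ| ≤ η) : (|t - 1| + ξ ^ n) / 6 ≤ 1 + t * deriv g ξ := by
  have h1 := (h.jacobian ξ hξ).1
  have h2 : 0 ≤ ξ ^ n := h.even.pow_nonneg ξ
  rw [abs_of_nonpos (by linarith)]
  nlinarith

theorem jacobian_ge_of_one_le (h : LocalProfile n g e η) {t ξ : ℝ} (ht : 1 ≤ t)
    (hξ : |ξ| ≤ η) (hξt : 3 / 4 * (t - 1) ≤ t * ξ ^ n) :
    (|t - 1| + ξ ^ n) / 6 ≤ 1 + t * deriv g ξ := by
  have h1 := (h.jacobian ξ hξ).1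
  have h2 : 0 ≤ ξ ^ n := h.even.pow_nonneg ξ
  rw [abs_of_nonneg (by linarith)]
  nlinarith

theorem branch_right (h : LocalProfile n g e η) {t' z' t z ξ : ℝ} (ht' : 1 < t') (htt : t' ≤ t)
    (hz'0 : 0 < z') (hz0 : 0 < z) (hz'η : z' < η) (hzη : z < η)
    (hz' : 3 / 4 * (t' - 1) ≤ t' * z' ^ n) (hz : 3 / 4 * (t - 1) ≤ t * z ^ n)
    (hξ : ξ ∈ uIcc z z') : (|t' - 1| + ξ ^ n) / 6 ≤ 1 + t' * deriv g ξ := by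
  have hz2 : 3 / 4 * (t' - 1) ≤ t' * z ^ n := by
    have h1 : t' * (3 / 4 * (t - 1)) ≤ t' * (t * z ^ n) := by gcongr
    have h2 : t * (3 / 4 * (t' - 1)) ≤ t' * (3 / 4 * (t - 1)) := by nlinarith
    have h3 : t * (3 / 4 * (t' - 1)) ≤ t * (t' * z ^ n) := by linarith
    exact le_of_mul_le_mul_left h3 (by linarith)
  rw [mem_uIcc] at hξ
  have hξ0 : 0 < ξ := by rcases hξ with hξ | hξ <;> linarith [hξ.1]
  have hξη : ξ ≤ η := by rcases hξ with hξ | hξ <;> linarith [hξ.2]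
  refine h.jacobian_ge_of_one_le ht'.le (by rwa [abs_of_pos hξ0]) ?_
  rcases hξ with hξ | hξ
  · exact hz2.trans (by have := hξ.1; gcongr)
  · exact hz'.trans (by have := hξ.1; gcongr)

theorem branch_left (h : LocalProfile n g e η) {t' z' t z ξ : ℝ} (ht' : 1 < t') (htt : t' ≤ t)
    (hz'0 : z' < 0) (hz0 : z < 0) (hz'η : -η < z') (hzη : -η < z)
    (hz' : 3 / 4 * (t' - 1) ≤ t' * z' ^ n) (hz : 3 / 4 * (t - 1) ≤ t * z ^ n)
    (hξ : ξ ∈ uIcc z z') : (|t' - 1| + ξ ^ n) / 6 ≤ 1 + t' * deriv g ξ := by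
  have := h.reflect.branch_right (t' := t') (t := t) (z' := -z') (z := -z) (ξ := -ξ) ht' htt
    (by linarith) (by linarith) (by linarith) (by linarith)
    (by rwa [h.even.neg_pow]) (by rwa [h.even.neg_pow])
    (by rw [mem_uIcc] at hξ ⊢
        rcases hξ with hξ | hξ
        · right; constructor <;> linarith [hξ.1, hξ.2]
        · left; constructor <;> linarith [hξ.1, hξ.2])
  rwa [deriv_neg_comp_neg, neg_neg, h.even.neg_pow] at this

theorem right_root_ge (h : LocalProfile n g e η) (he : e ≤ 1 / 8) {t x b σ δ : ℝ} (ht : 1 ≤ t)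
    (ht2 : t ≤ 2) (hσ : 0 ≤ σ) (hσn : σ ^ n = t - 1) (hδ0 : 0 ≤ δ)
    (hδ : δ * (2 * (n + 2)) ≤ 1 / 8) (hb : 0 < b) (hbη : b ≤ η) (hroot : b + t * g b = x)
    (hD : 0 ≤ 1 + t * deriv g b) (hx : -(δ * σ * (t - 1)) ≤ x) :
    3 / 4 * (t - 1) ≤ t * b ^ n := by
  have hj := (h.jacobian b (by rwa [abs_of_pos hb])).2
  rw [← hσn] at hx ⊢
  refine pow_root_ge_of_shock h.ne_zero (hb := g b + b) hb hσ ht ht2 hδ0 hδ ?_ hx ?_ ?_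
  · rw [hσn]
    nlinarith
  · rw [hσn, ← hroot]; ring
  · refine (h.right_bounds hb hbη).2.trans ?_
    gcongr
    linarith

theorem left_root_ge (h : LocalProfile n g e η) (he : e ≤ 1 / 8) {t x a σ δ : ℝ} (ht : 1 ≤ t)
    (ht2 : t ≤ 2) (hσ : 0 ≤ σ) (hσn : σ ^ n = t - 1) (hδ0 : 0 ≤ δ)
    (hδ : δ * (2 * (n + 2)) ≤ 1 / 8) (ha : a < 0) (haη : -η ≤ a) (hroot : a + t * g a = x)
    (hD : 0 ≤ 1 + t * deriv g a) (hx : x ≤ δ * σ * (t - 1)) :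
    3 / 4 * (t - 1) ≤ t * a ^ n := by
  have := h.reflect.right_root_ge he (t := t) (x := -x) (b := -a) ht ht2 hσ hσn hδ0 hδ
    (by linarith) (by linarith) (by rw [neg_neg]; linarith)
    (by rwa [deriv_neg_comp_neg, neg_neg]) (by linarith)
  rwa [h.even.neg_pow] at this

/-- Outer roots `a < 0 < b` over a common point: their size, and their asymmetry. -/
theorem outer_roots (h : LocalProfile n g e η) {ε t x a b σ : ℝ} (hε : 0 < ε) (hε1 : ε ≤ 1)
    (he : 4 * e ≤ ε) (ht : 1 ≤ t) (hσ : 0 ≤ σ) (hσn : σ ^ n = t - 1) (ha : a < 0) (hb : 0 < b)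
    (haη : -η ≤ a) (hbη : b ≤ η) (hra : a + t * g a = x) (hrb : b + t * g b = x) :
    b - a ≤ 8 * σ ∧ (0 ≤ x → -(2 * ε * (b - a)) ≤ a + b) ∧ (x ≤ 0 → a + b ≤ 2 * ε * (b - a)) := by
  obtain ⟨b1, b2⟩ := h.right_bounds hb hbη
  obtain ⟨a1, a2⟩ := h.left_bounds ha haη
  have ham : 0 < -a := by linarith
  have hbp : 0 < b ^ (n + 1) := by positivity
  have hap : 0 < (-a) ^ (n + 1) := by positivity
  have eb : t * (g b + b) = x + (t - 1) * b := by rw [← hrb]; ring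
  have ea : t * -(g a + a) = -x + (t - 1) * -a := by rw [← hra]; ring
  refine ⟨?_, ?_, ?_⟩
  · have := le_four_mul_of_roots h.ne_zero (hb := g b + b) (hm := -(g a + a)) hb ham hσ ht
      (by nlinarith) (by nlinarith) (by rw [hσn]; linarith)
    linarith [this.1, this.2]
  · intro hx
    have := left_root_le_of_nonneg h.ne_zero hb ham (by linarith) hε hε1 he b2 a1
      (τ := t - 1) (t := t) (by linarith) (by linarith)
    nlinarith
  · intro hx
    have := left_root_le_of_nonneg h.ne_zero ham hb (by linarith) hε hε1 he a2 b1
      (τ := t - 1) (t := t) (by linarith) (by linarith)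
    nlinarith

theorem abs_root_le_scale (h : LocalProfile n g e η) (he : e ≤ 1 / 4) {t x z σ X : ℝ}
    (ht : 1 / 2 ≤ t) (ht2 : t ≤ 2) (hσ : 0 ≤ σ) (hX : 0 ≤ X) (hσn : σ ^ n = |t - 1|)
    (hXn : X ^ (n + 1) = |x|) (hzη : |z| ≤ η) (hz : z + t * g z = x) :
    |z| ≤ 8 * (σ + X) ∧ (σ + X) ^ n ≤ 6 ^ n * (|t - 1| + |z| ^ n) := by
  have hr := h.remainder z hzη
  have hzn : 0 ≤ |z| ^ (n + 1) := by positivity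
  have hxz : x = t * (g z + z) - (t - 1) * z := by rw [← hz]; ring
  have h1 := abs_sub_abs_le_abs_sub (g z + z) (z ^ (n + 1))
  have h2 := abs_sub_abs_le_abs_sub (z ^ (n + 1)) (g z + z)
  rw [abs_sub_comm] at h2
  rw [abs_pow] at h1 h2
  exact ⟨abs_root_le h.ne_zero ht hσ hX hσn hXn hxz (by nlinarith),
    scale_pow_le (by linarith) ht2 hσ hX hσn hXn hxz (by nlinarith)⟩

/-- The shock curve stays well inside the cusp region bounded by the folds. -/
theorem abs_shock_le (h : LocalProfile n g e η) {ε u1 ε1 : ℝ} {U F φ ya yb : ℝ → ℝ}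
    (hε : 0 < ε) (hε1 : ε ≤ 1 / 2) (he : 4 * e ≤ ε) (hu1 : u1 ≠ 0)
    (hU : ∀ z, DifferentiableAt ℝ U z) (hF : ∀ z, HasDerivAt F (g z * deriv U z) z)
    (hU1 : ∀ z, |z| ≤ η → |deriv U z - u1| ≤ ε * |u1|) (hg : ∀ z, |z| ≤ η → |g z + z| ≤ ε * |z|)
    (hφ1 : φ 1 = 0) (hφc : ContinuousOn φ (Ico (1 : ℝ) (1 + ε1)))
    (hya : ∀ t ∈ Ioo (1 : ℝ) (1 + ε1), ya t < 0 ∧ -η ≤ ya t ∧ ya t + t * g (ya t) = φ t)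
    (hyb : ∀ t ∈ Ioo (1 : ℝ) (1 + ε1), 0 < yb t ∧ yb t ≤ η ∧ yb t + t * g (yb t) = φ t)
    (hode : ∀ t ∈ Ioo (1 : ℝ) (1 + ε1),
      HasDerivAt φ ((F (yb t) - F (ya t)) / (U (yb t) - U (ya t))) t)
    {t : ℝ} (ht : t ∈ Ioo (1 : ℝ) (1 + ε1)) :
    |φ t| ≤ 64 * ε * (t - 1) ^ ((1 : ℝ) / n) * (t - 1) := by
  have speed : ∀ t ∈ Ioo (1 : ℝ) (1 + ε1),
      (0 ≤ φ t → (F (yb t) - F (ya t)) / (U (yb t) - U (ya t))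
        ≤ 64 * ε * (t - 1) ^ ((1 : ℝ) / n)) ∧
      (φ t ≤ 0 → -(64 * ε * (t - 1) ^ ((1 : ℝ) / n))
        ≤ (F (yb t) - F (ya t)) / (U (yb t) - U (ya t))) := by
    intro t ht
    have hτ : 0 ≤ t - 1 := by linarith [ht.1]
    obtain ⟨a0, aη, ra⟩ := hya t ht
    obtain ⟨b0, bη, rb⟩ := hyb t ht
    have hσn : ((t - 1) ^ ((1 : ℝ) / n)) ^ n = t - 1 := by
      rw [one_div]; exact Real.rpow_inv_natCast_pow hτ h.ne_zero
    obtain ⟨hsize, hpos, hneg⟩ := h.outer_roots hε (by linarith) he ht.1.le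
      (Real.rpow_nonneg hτ _) hσn a0 b0 aη bη ra rb
    have hIcc : ∀ z ∈ Icc (ya t) (yb t), |z| ≤ η := fun z hz =>
      abs_le.2 ⟨aη.trans hz.1, hz.2.trans bη⟩
    obtain ⟨s1, s2⟩ := rankineHugoniot_speed_le hu1 hε hε1 a0 b0 hU hF
      (fun z hz => hU1 z (hIcc z hz)) (fun z hz => hg z (hIcc z hz))
    have hmul : 8 * ε * (yb t - ya t) ≤ 64 * ε * (t - 1) ^ ((1 : ℝ) / n) := by nlinarith
    exact ⟨fun hx => (s1 (hpos hx)).trans hmul, fun hx => (neg_le_neg hmul).trans (s2 (hneg hx))⟩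
  have hp : (0 : ℝ) ≤ 1 / n := by positivity
  have up := le_mul_rpow_of_deriv_le_of_pos (δ := 64 * ε) (by positivity) hp hφ1 hφc hode
    (fun t ht hx => (speed t ht).1 hx.le) ht
  have low := le_mul_rpow_of_deriv_le_of_pos (δ := 64 * ε) (φ := fun t => -φ t)
    (s := fun t => -((F (yb t) - F (ya t)) / (U (yb t) - U (ya t)))) (by positivity) hp
    (by simp [hφ1]) hφc.neg (fun t ht => (hode t ht).neg)
    (fun t ht hx => by linarith [(speed t ht).2 (by linarith)]) ht
  exact abs_le.2 ⟨by linarith, up⟩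

end LocalProfile

theorem AssumptionA.exists_localProfile {k : ℕ} {g u0 : ℝ → ℝ} (hA : AssumptionA k g)
    (hu0 : ContDiff ℝ 1 u0) (hu1 : deriv u0 0 ≠ 0) {e ε δ : ℝ} (he : 0 < e) (he1 : e ≤ 1)
    (hε : 0 < ε) (hδ : 0 < δ) :
    ∃ η, η < δ ∧ LocalProfile (2 * k) g e η ∧
      (∀ z, |z| ≤ η → |deriv u0 z - deriv u0 0| ≤ ε * |deriv u0 0|) ∧
      ∀ z, |z| ≤ η → |g z + z| ≤ ε * |z| := by
  have hk : 1 ≤ k := hA.1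
  have hev1 : ∀ᶠ z in 𝓝 (0 : ℝ), |deriv u0 z - deriv u0 0| < ε * |deriv u0 0| := by
    have hc : Continuous (deriv u0) := hu0.continuous_deriv le_rfl
    have hpos : 0 < ε * |deriv u0 0| := mul_pos hε (abs_pos.2 hu1)
    exact (Continuous.tendsto' (by fun_prop) 0 0 (by simp)).eventually_lt_const hpos
  have hev2 : ∀ᶠ z in 𝓝 (0 : ℝ), 2 * |z| ^ (2 * k) < ε := by
    refine (Continuous.tendsto' (by fun_prop) 0 0 ?_).eventually_lt_const hε
    simp; omega
  obtain ⟨η0, hη0, hball⟩ := Metric.eventually_nhds_iff.1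
    ((hA.eventually_abs_remainder_le he).and (hev1.and hev2))
  have hin : ∀ z, |z| ≤ min (η0 / 2) (δ / 2) → dist z 0 < η0 := by
    intro z hz
    rw [Real.dist_eq, sub_zero]
    linarith [min_le_left (η0 / 2) (δ / 2)]
  obtain ⟨-, hg, -, -, hmin, -⟩ := hA
  refine ⟨min (η0 / 2) (δ / 2), by linarith [min_le_right (η0 / 2) (δ / 2)], ?_, ?_, ?_⟩
  · refine ⟨by positivity, even_two_mul k, by omega, hg.differentiable (by simp), hmin, ?_, ?_⟩
    · exact fun z hz => (hball (hin z hz)).1.1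
    · intro z hz
      have h1 := abs_le.1 (hball (hin z hz)).1.2
      rw [(even_two_mul k).pow_abs] at h1
      have h2 : 0 ≤ z ^ (2 * k) := (even_two_mul k).pow_nonneg z
      have h3 : (1 : ℝ) ≤ k := by exact_mod_cast hk
      push_cast
      constructor <;> nlinarith [h1.1, h1.2]
  · exact fun z hz => (hball (hin z hz)).2.1.le
  · intro z hz
    have h1 := (hball (hin z hz)).1.1
    have h2 := (hball (hin z hz)).2.2
    have h3 := abs_sub_abs_le_abs_sub (g z + z) (z ^ (2 * k + 1))
    rw [abs_pow] at h3
    have h4 : 0 ≤ |z| ^ (2 * k + 1) := by positivity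
    have h5 : |g z + z| ≤ 2 * |z| ^ (2 * k) * |z| := by
      rw [mul_assoc, ← pow_succ]; nlinarith
    exact h5.trans (by gcongr)

/-- Near the blowup point and off the shock, `u = u₀(z)` for a small characteristic root `z`, with
derivatives controlled by the Jacobian of the characteristic flow. -/
theorem eventually_exists_root (k : ℕ) (f u0 g : ℝ → ℝ)
    (hf : ContDiff ℝ 2 f) (hu0 : ContDiff ℝ 1 u0)
    (hgdef : ∀ x, g x = deriv f (u0 x)) (hA : AssumptionA k g)
    (ε₀ δ₀ : ℝ) (hε₀ : 0 < ε₀) (hδ₀ : 0 < δ₀)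
    (u : ℝ → ℝ → ℝ) (y ym yp : ℝ → ℝ → ℝ) (φ : ℝ → ℝ)
    -- the characteristic roots: y (t ≤ 1), y₋, y₊ (t > 1)
    (hy : ∀ t x z : ℝ, 1 - ε₀ < t → t ≤ 1 → z + t * g z = x → |z| < δ₀ → y t x = z)
    (hyp : ∀ t x z : ℝ, 1 < t → t < 1 + ε₀ → z + t * g z = x → 0 < z → z < δ₀ →
      0 ≤ 1 + t * deriv g z → yp t x = z)
    (hym : ∀ t x z : ℝ, 1 < t → t < 1 + ε₀ → z + t * g z = x → -δ₀ < z → z < 0 →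
      0 ≤ 1 + t * deriv g z → ym t x = z)
    -- the shock curve issuing from (1,0), solving the Rankine–Hugoniot ODE
    (hφ1 : φ 1 = 0) (hφc : ContinuousOn φ (Ico (1 : ℝ) (1 + ε₀)))
    (hφroots : ∀ t ∈ Ioo (1 : ℝ) (1 + ε₀),
      (∃ z, z + t * g z = φ t ∧ 0 < z ∧ z < δ₀ ∧ 0 ≤ 1 + t * deriv g z) ∧
      (∃ z, z + t * g z = φ t ∧ -δ₀ < z ∧ z < 0 ∧ 0 ≤ 1 + t * deriv g z))
    (hφode : ∀ t ∈ Ioo (1 : ℝ) (1 + ε₀),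
      HasDerivAt φ ((f (u0 (yp t (φ t))) - f (u0 (ym t (φ t))))
        / (u0 (yp t (φ t)) - u0 (ym t (φ t)))) t)
    -- the entropy solution u
    (hu_le : ∀ t x : ℝ, 1 - ε₀ < t → t ≤ 1 → |x| < δ₀ → u t x = u0 (y t x))
    (hu_lt : ∀ t x : ℝ, 1 < t → t < 1 + ε₀ → |x| < δ₀ → x < φ t → u t x = u0 (ym t x))
    (hu_gt : ∀ t x : ℝ, 1 < t → t < 1 + ε₀ → |x| < δ₀ → φ t < x → u t x = u0 (yp t x)) :
    ∃ η L : ℝ, ∃ e : ℝ, e ≤ 1 / 8 ∧ 0 ≤ L ∧ LocalProfile (2 * k) g e η ∧ u 1 0 = u0 0 ∧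
      (∀ z, |z| < η → |u0 z - u0 0| ≤ L * |z|) ∧ (∀ z, |z| < η → |g z| ≤ 2 * |z|) ∧
      ∀ᶠ q in 𝓝[{q : ℝ × ℝ | ¬ (1 ≤ q.1 ∧ q.2 = φ q.1)}] ((1 : ℝ), (0 : ℝ)),
        1 / 2 ≤ q.1 ∧ q.1 ≤ 2 ∧ ∃ z, |z| < η ∧ z + q.1 * g z = q.2 ∧ u q.1 q.2 = u0 z ∧
          0 < |q.1 - 1| + |z| ^ (2 * k) ∧
          |deriv (fun s => u s q.2) q.1|
            ≤ 12 * ((2 * k : ℕ) + 1) * L * |g z| / (|q.1 - 1| + |z| ^ (2 * k)) ∧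
          |deriv (fun y => u q.1 y) q.2|
            ≤ 12 * ((2 * k : ℕ) + 1) * L / (|q.1 - 1| + |z| ^ (2 * k)) := by
  obtain ⟨M, hM⟩ := hA.2.2.1
  have hM0 : 0 ≤ M := (abs_nonneg _).trans (hM 0)
  have hk : 1 ≤ k := hA.1
  have hud : Differentiable ℝ u0 := hu0.differentiable (by simp)
  have hfd : Differentiable ℝ f := hf.differentiable (by simp)
  have hf'd : Differentiable ℝ (deriv f) := hf.differentiable_deriv_two
  have hu1 : deriv u0 0 ≠ 0 := by
    intro h0
    have hd : HasDerivAt g (deriv (deriv f) (u0 0) * deriv u0 0) 0 := by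
      rw [show g = fun x => deriv f (u0 x) from funext hgdef]
      exact (hf'd (u0 0)).hasDerivAt.comp (0 : ℝ) (hud 0).hasDerivAt
    have h1 := hA.2.2.2.1
    rw [hd.deriv, h0] at h1
    norm_num at h1
  have hF : ∀ z, HasDerivAt (fun w => f (u0 w)) (g z * deriv u0 z) z := by
    intro z
    rw [hgdef]
    exact (hfd (u0 z)).hasDerivAt.comp z (hud z).hasDerivAt
  set ε : ℝ := 1 / (1024 * ((2 * k : ℕ) + 2)) with hεdef
  have hε : 0 < ε := by positivity
  have hεk : ε * (1024 * ((2 * k : ℕ) + 2)) = 1 := by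
    rw [hεdef]; field_simp
  have hε1 : ε ≤ 1 / 2 := by
    have : (0 : ℝ) ≤ (2 * k : ℕ) := by positivity
    nlinarith
  obtain ⟨η, hηδ, hP, hU1, hgε⟩ := hA.exists_localProfile hu0 hu1 (e := ε / 4) (by positivity)
    (by linarith) hε hδ₀
  have hη := hP.pos
  have hg0 : g 0 = 0 := by
    have := hgε 0 (by simpa using hη.le)
    simpa using this
  have hLip : ∀ z w, |z| < η → |w| < η → |u0 z - u0 w| ≤ 2 * |deriv u0 0| * |z - w| := by
    intro z w hz hw
    have := Convex.norm_image_sub_le_of_norm_deriv_le (𝕜 := ℝ) (f := u0)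
      (s := Icc (-η) η) (C := 2 * |deriv u0 0|) (x := w) (y := z) (fun x _ => hud x) ?_
      (convex_Icc _ _) (abs_le.1 hw.le) (abs_le.1 hz.le)
    · simpa [Real.norm_eq_abs] using this
    · intro x hx
      have h1 := hU1 x (abs_le.2 hx)
      have h2 := abs_sub_abs_le_abs_sub (deriv u0 x) (deriv u0 0)
      rw [Real.norm_eq_abs]
      nlinarith [abs_nonneg (deriv u0 0)]
  set c0 : ℝ := (1 - ε / 4) * η ^ (2 * k + 1) with hc0def
  have hc0 : 0 < c0 := mul_pos (by linarith) (by positivity)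
  -- a time interval on which the shock curve stays small
  obtain ⟨ε1, hε1pos, hε1ε₀, hε1half, hε1M, hφsmall⟩ : ∃ ε1 : ℝ, 0 < ε1 ∧ ε1 ≤ ε₀ ∧ ε1 ≤ 1 / 2 ∧
      ε1 * M < c0 / 2 ∧ ∀ t ∈ Ioo (1 : ℝ) (1 + ε1), |φ t| < c0 / 2 := by
    have hcw : ContinuousWithinAt φ (Ico (1 : ℝ) (1 + ε₀)) 1 := hφc 1 ⟨le_rfl, by linarith⟩
    obtain ⟨d, hd, hdφ⟩ := Metric.continuousWithinAt_iff.1 hcw (c0 / 2) (by positivity)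
    refine ⟨min (min ε₀ d) (min (1 / 2) (c0 / (4 * (M + 1)))), by positivity,
      (min_le_left _ _).trans (min_le_left _ _), (min_le_right _ _).trans (min_le_left _ _), ?_, ?_⟩
    · have h1 : min (min ε₀ d) (min (1 / 2) (c0 / (4 * (M + 1)))) ≤ c0 / (4 * (M + 1)) :=
        (min_le_right _ _).trans (min_le_right _ _)
      rw [le_div_iff₀ (by positivity)] at h1
      have h2 : 0 < min (min ε₀ d) (min (1 / 2) (c0 / (4 * (M + 1)))) := by positivity
      nlinarith
    · intro t ht
      have h1 : t < 1 + ε₀ :=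
        ht.2.trans_le (by gcongr; exact (min_le_left _ _).trans (min_le_left _ _))
      have h2 : t < 1 + d :=
        ht.2.trans_le (by gcongr; exact (min_le_left _ _).trans (min_le_right _ _))
      have := hdφ ⟨ht.1.le, h1⟩ (by
        rw [Real.dist_eq, abs_of_pos (by linarith [ht.1])]; linarith)
      rwa [hφ1, Real.dist_eq, sub_zero] at this
  have hsmall : ∀ t x : ℝ, |t - 1| < ε1 → |x| < c0 / 2 →
      |t - 1| * M + |x| < (1 - ε / 4) * η ^ (2 * k + 1) := by
    intro t x ht hx
    rw [← hc0def]
    nlinarith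
  have htabs : ∀ t ∈ Ioo (1 : ℝ) (1 + ε1), |t - 1| < ε1 := fun t ht => by
    rw [abs_of_pos (by linarith [ht.1])]; linarith [ht.2]
  have hsub : Ioo (1 : ℝ) (1 + ε1) ⊆ Ioo (1 : ℝ) (1 + ε₀) := Ioo_subset_Ioo le_rfl (by linarith)
  -- the outer roots over the shock curve
  have hyb : ∀ t ∈ Ioo (1 : ℝ) (1 + ε1), 0 < yp t (φ t) ∧ yp t (φ t) < η ∧
      yp t (φ t) + t * g (yp t (φ t)) = φ t ∧ 0 ≤ 1 + t * deriv g (yp t (φ t)) := by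
    intro t ht
    obtain ⟨z, hz, hz0, hzδ, hzD⟩ := (hφroots t (hsub ht)).1
    rw [hyp t (φ t) z ht.1 (hsub ht).2 hz hz0 hzδ hzD]
    exact ⟨hz0, hP.root_lt hM (hsmall t _ (htabs t ht) (hφsmall t ht)) hz, hz, hzD⟩
  have hya : ∀ t ∈ Ioo (1 : ℝ) (1 + ε1), ym t (φ t) < 0 ∧ -η < ym t (φ t) ∧
      ym t (φ t) + t * g (ym t (φ t)) = φ t ∧ 0 ≤ 1 + t * deriv g (ym t (φ t)) := by
    intro t ht
    obtain ⟨z, hz, hzδ, hz0, hzD⟩ := (hφroots t (hsub ht)).2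
    rw [hym t (φ t) z ht.1 (hsub ht).2 hz hzδ hz0 hzD]
    exact ⟨hz0, hP.neg_lt_root hM (hsmall t _ (htabs t ht) (hφsmall t ht)) hz, hz, hzD⟩
  have hshock : ∀ t ∈ Ioo (1 : ℝ) (1 + ε1),
      |φ t| ≤ 64 * ε * (t - 1) ^ ((1 : ℝ) / (2 * k : ℕ)) * (t - 1) := fun t ht =>
    hP.abs_shock_le hε hε1 (by linarith) hu1 hud hF hU1 hgε hφ1
      (hφc.mono (Ico_subset_Ico le_rfl (by linarith)))
      (fun t ht => ⟨(hya t ht).1, (hya t ht).2.1.le, (hya t ht).2.2.1⟩)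
      (fun t ht => ⟨(hyb t ht).1, (hyb t ht).2.1.le, (hyb t ht).2.2.1⟩)
      (fun t ht => hφode t (hsub ht)) ht
  have hgap : ∀ t ∈ Ioo (1 : ℝ) (1 + ε1), 3 / 4 * (t - 1) ≤ t * yp t (φ t) ^ (2 * k) ∧
      3 / 4 * (t - 1) ≤ t * ym t (φ t) ^ (2 * k) := by
    intro t ht
    have hτ : 0 ≤ t - 1 := by linarith [ht.1]
    have hσn : ((t - 1) ^ ((1 : ℝ) / (2 * k : ℕ))) ^ (2 * k) = t - 1 := by
      rw [one_div]; exact Real.rpow_inv_natCast_pow hτ hP.ne_zero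
    obtain ⟨hlo, hhi⟩ := abs_le.1 (hshock t ht)
    have ht2 : t ≤ 2 := by linarith [ht.2]
    constructor
    · exact hP.right_root_ge (by linarith) ht.1.le ht2 (Real.rpow_nonneg hτ _) hσn
        (by positivity : 0 ≤ 64 * ε) (by linarith) (hyb t ht).1 (hyb t ht).2.1.le
        (hyb t ht).2.2.1 (hyb t ht).2.2.2 hlo
    · exact hP.left_root_ge (by linarith) ht.1.le ht2 (Real.rpow_nonneg hτ _) hσn
        (by positivity : 0 ≤ 64 * ε) (by linarith) (hya t ht).1 (hya t ht).2.1.le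
        (hya t ht).2.2.1 (hya t ht).2.2.2 hhi
  have hDnonneg : ∀ t z : ℝ, 1 < t → |z| ≤ η → 3 / 4 * (t - 1) ≤ t * z ^ (2 * k) →
      0 ≤ 1 + t * deriv g z := by
    intro t z ht hz h
    refine le_trans ?_ (hP.jacobian_ge_of_one_le ht.le hz h)
    have := hP.even.pow_nonneg z
    positivity
  set δ1 : ℝ := min δ₀ (c0 / 2) with hδ1
  have hδ1pos : 0 < δ1 := by positivity
  have hxabs : ∀ {x : ℝ}, |x| < δ1 → ∀ᶠ x' in 𝓝 x, |x'| < δ1 := fun hx =>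
    continuous_abs.continuousAt.eventually_lt continuousAt_const hx
  have hφcont : ∀ t ∈ Ioo (1 : ℝ) (1 + ε1), ContinuousAt φ t := fun t ht =>
    (hφode t (hsub ht)).continuousAt
  refine ⟨η, 2 * |deriv u0 0|, ε / 4, by linarith, by positivity, hP, ?_, ?_, ?_, ?_⟩
  · rw [hu_le 1 0 (by linarith) le_rfl (by simpa using hδ₀),
      hy 1 0 0 (by linarith) le_rfl (by simp [hg0]) (by simpa using hδ₀)]
  · intro z hz
    simpa using hLip z 0 hz (by simpa using hη)
  · intro z hz
    have h1 := hgε z hz.le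
    have h2 := abs_sub_abs_le_abs_sub (g z) (-z)
    rw [abs_neg, sub_neg_eq_add] at h2
    nlinarith [abs_nonneg z]
  have hnear : ∀ᶠ q in 𝓝 ((1 : ℝ), (0 : ℝ)), |q.1 - 1| < ε1 ∧ |q.2| < δ1 := by
    refine Filter.Eventually.and ?_ ?_
    · exact (Continuous.tendsto' (by fun_prop) _ 0 (by simp)).eventually_lt_const hε1pos
    · exact (Continuous.tendsto' (by fun_prop) _ 0 (by simp)).eventually_lt_const hδ1pos
  filter_upwards [nhdsWithin_le_nhds hnear, self_mem_nhdsWithin] with q hq hqS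
  obtain ⟨t, x⟩ := q
  obtain ⟨ht, hx⟩ := hq
  have hqS : ¬ (1 ≤ t ∧ x = φ t) := hqS
  simp only at ht hx ⊢
  obtain ⟨ht1, ht2⟩ := abs_lt.1 ht
  refine ⟨by linarith, by linarith, ?_⟩
  have hne : t = 1 → x ≠ g 0 := by
    rintro rfl hx0
    exact hqS ⟨le_rfl, by rw [hx0, hg0, hφ1]⟩
  have hLpos : 0 ≤ 2 * |deriv u0 0| := by positivity
  rcases le_or_gt t 1 with hle | hgt
  · -- before the blowup time
    refine abs_deriv_le_of_branch hP.even hP.diff hLpos hLip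
      (B := {p | 1 / 2 ≤ p.1 ∧ p.1 ≤ 1 ∧ |p.2| ≤ η})
      (Ω := {p | 1 - ε1 < p.1 ∧ p.1 ≤ 1 ∧ |p.2| < δ1}) ?_ ?_ ⟨by linarith, hle, hx⟩ ?_ ?_ hne
    · rintro t' z' t z ⟨h1, h2, h3⟩ ⟨-, -, h6⟩ - ξ hξ
      refine hP.jacobian_ge_of_le_one h1 h2 (abs_le.2 ?_)
      have := uIcc_subset_Icc (abs_le.1 h6) (abs_le.1 h3) hξ
      exact this
    · rintro s w ⟨h1, h2, h3⟩
      have hs := hsmall s w (abs_lt.2 ⟨by linarith, by linarith⟩) (h3.trans_le (min_le_right _ _))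
      obtain ⟨z, -, hzη, hz⟩ := hP.exists_root_gt hM (b := -η - 1) hs (by
        by_contra hcon
        rcases (not_lt.1 hcon).lt_or_eq with hlt | heq
        · obtain ⟨z, hz1, hz2, hz3⟩ := hP.exists_root_lt hM hs hlt
          linarith
        · linarith [hP.neg_lt_root hM hs heq.symm])
      have hzlow := hP.neg_lt_root hM hs hz
      have hzabs : |z| < η := abs_lt.2 ⟨hzlow, hzη⟩
      refine ⟨z, hzabs, ⟨by simp only; linarith, h2, hzabs.le⟩, hz, ?_⟩
      simp only at h1 h2 h3
      rw [hu_le s w (by linarith) h2 (h3.trans_le (min_le_left _ _)),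
        hy s w z (by linarith) h2 hz (hzabs.trans hηδ)]
    · filter_upwards [hxabs hx] with x' hx'
      exact ⟨by linarith, hle, hx'⟩
    · filter_upwards [self_mem_nhdsWithin,
        nhdsWithin_le_nhds (lt_mem_nhds (by linarith : 1 - ε1 < t))] with s hs hs'
      exact ⟨hs', (le_of_lt hs).trans hle, hx⟩
  have htI : t ∈ Ioo (1 : ℝ) (1 + ε1) := ⟨hgt, by linarith⟩
  have hleft : ∀ᶠ s in 𝓝[<] t, s ∈ Ioo (1 : ℝ) (1 + ε1) :=
    nhdsWithin_le_nhds (Ioo_mem_nhds htI.1 htI.2)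
  rcases lt_trichotomy x (φ t) with hlt | heq | hright
  · -- left of the shock
    refine abs_deriv_le_of_branch hP.even hP.diff hLpos hLip
      (B := {p | 1 < p.1 ∧ p.2 < 0 ∧ -η < p.2 ∧ 3 / 4 * (p.1 - 1) ≤ p.1 * p.2 ^ (2 * k)})
      (Ω := {p | p.1 ∈ Ioo (1 : ℝ) (1 + ε1) ∧ |p.2| < δ1 ∧ p.2 < φ p.1}) ?_ ?_ ⟨htI, hx, hlt⟩
      ?_ ?_ hne
    · rintro t' z' t z ⟨h1, h2, h3, h4⟩ ⟨-, h6, h7, h8⟩ htt ξ hξ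
      exact hP.branch_left h1 htt h2 h6 h3 h7 h4 h8 hξ
    · rintro s w ⟨hs, hw, hwφ⟩
      simp only at hs hw hwφ
      have hss := hsmall s w (htabs s hs) (hw.trans_le (min_le_right _ _))
      obtain ⟨ha0, haη, har, -⟩ := hya s hs
      obtain ⟨z, hza, hzη, hz⟩ := hP.exists_root_lt hM (a := ym s (φ s)) hss (by rwa [har])
      have hz0 : z < 0 := hza.trans ha0
      have hzabs : |z| < η := abs_lt.2 ⟨hzη, by linarith⟩
      have hzgap : 3 / 4 * (s - 1) ≤ s * z ^ (2 * k) := by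
        refine (hgap s hs).2.trans ?_
        have h1 : ym s (φ s) ^ (2 * k) ≤ z ^ (2 * k) := by
          rw [← hP.even.pow_abs, ← hP.even.pow_abs z]
          refine pow_le_pow_left₀ (abs_nonneg _) ?_ _
          rw [abs_of_neg ha0, abs_of_neg hz0]
          linarith
        have h2 : (0 : ℝ) ≤ s := by linarith [hs.1]
        gcongr
      refine ⟨z, hzabs, ⟨hs.1, hz0, hzη, hzgap⟩, hz, ?_⟩
      rw [hu_lt s w hs.1 (hsub hs).2 (hw.trans_le (min_le_left _ _)) hwφ,
        hym s w z hs.1 (hsub hs).2 hz (by linarith) hz0 (hDnonneg s z hs.1 hzabs.le hzgap)]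
    · filter_upwards [hxabs hx, gt_mem_nhds hlt] with x' hx' hx''
      exact ⟨htI, hx', hx''⟩
    · filter_upwards [hleft, nhdsWithin_le_nhds ((hφcont t htI).eventually_const_lt hlt)]
        with s hs hs'
      exact ⟨hs, hx, hs'⟩
  · exact absurd ⟨hgt.le, heq⟩ hqS
  · -- right of the shock
    refine abs_deriv_le_of_branch hP.even hP.diff hLpos hLip
      (B := {p | 1 < p.1 ∧ 0 < p.2 ∧ p.2 < η ∧ 3 / 4 * (p.1 - 1) ≤ p.1 * p.2 ^ (2 * k)})
      (Ω := {p | p.1 ∈ Ioo (1 : ℝ) (1 + ε1) ∧ |p.2| < δ1 ∧ φ p.1 < p.2}) ?_ ?_ ⟨htI, hx, hright⟩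
      ?_ ?_ hne
    · rintro t' z' t z ⟨h1, h2, h3, h4⟩ ⟨-, h6, h7, h8⟩ htt ξ hξ
      exact hP.branch_right h1 htt h2 h6 h3 h7 h4 h8 hξ
    · rintro s w ⟨hs, hw, hwφ⟩
      simp only at hs hw hwφ
      have hss := hsmall s w (htabs s hs) (hw.trans_le (min_le_right _ _))
      obtain ⟨hb0, hbη, hbr, -⟩ := hyb s hs
      obtain ⟨z, hzb, hzη, hz⟩ := hP.exists_root_gt hM (b := yp s (φ s)) hss (by rwa [hbr])
      have hz0 : 0 < z := hb0.trans hzb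
      have hzabs : |z| < η := abs_lt.2 ⟨by linarith, hzη⟩
      have hzgap : 3 / 4 * (s - 1) ≤ s * z ^ (2 * k) := by
        refine (hgap s hs).1.trans ?_
        have h2 : (0 : ℝ) ≤ s := by linarith [hs.1]
        gcongr
      refine ⟨z, hzabs, ⟨hs.1, hz0, hzη, hzgap⟩, hz, ?_⟩
      rw [hu_gt s w hs.1 (hsub hs).2 (hw.trans_le (min_le_left _ _)) hwφ,
        hyp s w z hs.1 (hsub hs).2 hz hz0 (by linarith) (hDnonneg s z hs.1 hzabs.le hzgap)]
    · filter_upwards [hxabs hx, lt_mem_nhds hright] with x' hx' hx''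
      exact ⟨htI, hx', hx''⟩
    · filter_upwards [hleft, nhdsWithin_le_nhds ((hφcont t htI).eventually_lt_const hright)]
        with s hs hs'
      exact ⟨hs, hx, hs'⟩

/-- Under (A_k), for the entropy solution `u` built from the characteristic roots
(`u = u₀(y(t,x))` for `t ≤ 1`, `u = u₀(y₋(t,x))` left of the shock and `u = u₀(y₊(t,x))`
right of the shock for `t > 1`), one has, in a punctured neighbourhood of the blowup
point `(1,0)` excluding the shock curve `{(t, φ(t)) : t ≥ 1}`:
`|u(t,x) - u(1,0)| = O(|t-1|^{1/(2k)} + |x|^{1/(2k+1)})`,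
`|∂_t u(t,x)| = O((|t-1|^{1/(2k)} + |x|^{1/(2k+1)})^{-(2k-1)})`,
`|∂_x u(t,x)| = O((|t-1|^{1/(2k)} + |x|^{1/(2k+1)})^{-2k})`. -/
theorem statement1 (k : ℕ) (f u0 g : ℝ → ℝ)
    (hf : ContDiff ℝ 2 f) (hu0 : ContDiff ℝ 1 u0)
    (hgdef : ∀ x, g x = deriv f (u0 x)) (hA : AssumptionA k g)
    (ε₀ δ₀ : ℝ) (hε₀ : 0 < ε₀) (hδ₀ : 0 < δ₀)
    (u : ℝ → ℝ → ℝ) (y ym yp : ℝ → ℝ → ℝ) (φ : ℝ → ℝ)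
    -- the characteristic roots: y (t ≤ 1), y₋, y₊ (t > 1)
    (hy : ∀ t x z : ℝ, 1 - ε₀ < t → t ≤ 1 → z + t * g z = x → |z| < δ₀ → y t x = z)
    (hyp : ∀ t x z : ℝ, 1 < t → t < 1 + ε₀ → z + t * g z = x → 0 < z → z < δ₀ →
      0 ≤ 1 + t * deriv g z → yp t x = z)
    (hym : ∀ t x z : ℝ, 1 < t → t < 1 + ε₀ → z + t * g z = x → -δ₀ < z → z < 0 →
      0 ≤ 1 + t * deriv g z → ym t x = z)
    -- the shock curve issuing from (1,0), solving the Rankine–Hugoniot ODE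
    (hφ1 : φ 1 = 0) (hφc : ContinuousOn φ (Ico (1 : ℝ) (1 + ε₀)))
    (hφroots : ∀ t ∈ Ioo (1 : ℝ) (1 + ε₀),
      (∃ z, z + t * g z = φ t ∧ 0 < z ∧ z < δ₀ ∧ 0 ≤ 1 + t * deriv g z) ∧
      (∃ z, z + t * g z = φ t ∧ -δ₀ < z ∧ z < 0 ∧ 0 ≤ 1 + t * deriv g z))
    (hφode : ∀ t ∈ Ioo (1 : ℝ) (1 + ε₀),
      HasDerivAt φ ((f (u0 (yp t (φ t))) - f (u0 (ym t (φ t))))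
        / (u0 (yp t (φ t)) - u0 (ym t (φ t)))) t)
    -- the entropy solution u
    (hu_le : ∀ t x : ℝ, 1 - ε₀ < t → t ≤ 1 → |x| < δ₀ → u t x = u0 (y t x))
    (hu_lt : ∀ t x : ℝ, 1 < t → t < 1 + ε₀ → |x| < δ₀ → x < φ t → u t x = u0 (ym t x))
    (hu_gt : ∀ t x : ℝ, 1 < t → t < 1 + ε₀ → |x| < δ₀ → φ t < x → u t x = u0 (yp t x)) :
    -- punctured neighbourhood of (1,0) excluding the shock curve
    ((fun q : ℝ × ℝ => u q.1 q.2 - u 1 0)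
        =O[𝓝[{q : ℝ × ℝ | ¬ (1 ≤ q.1 ∧ q.2 = φ q.1)}] ((1 : ℝ), (0 : ℝ))]
      fun q : ℝ × ℝ => |q.1 - 1| ^ ((1 : ℝ) / (2 * (k : ℝ))) + |q.2| ^ ((1 : ℝ) / (2 * (k : ℝ) + 1))) ∧
    ((fun q : ℝ × ℝ => deriv (fun t => u t q.2) q.1)
        =O[𝓝[{q : ℝ × ℝ | ¬ (1 ≤ q.1 ∧ q.2 = φ q.1)}] ((1 : ℝ), (0 : ℝ))]
      fun q : ℝ × ℝ =>
        (|q.1 - 1| ^ ((1 : ℝ) / (2 * (k : ℝ))) + |q.2| ^ ((1 : ℝ) / (2 * (k : ℝ) + 1)))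
          ^ (-(2 * (k : ℝ) - 1))) ∧
    ((fun q : ℝ × ℝ => deriv (fun x => u q.1 x) q.2)
        =O[𝓝[{q : ℝ × ℝ | ¬ (1 ≤ q.1 ∧ q.2 = φ q.1)}] ((1 : ℝ), (0 : ℝ))]
      fun q : ℝ × ℝ =>
        (|q.1 - 1| ^ ((1 : ℝ) / (2 * (k : ℝ))) + |q.2| ^ ((1 : ℝ) / (2 * (k : ℝ) + 1)))
          ^ (-(2 * (k : ℝ)))) := by
  obtain ⟨η, L, e, he, hL, hP, hu10, hLip, hgε, hev⟩ := eventually_exists_root k f u0 g hf hu0 hgdef hA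
    ε₀ δ₀ hε₀ hδ₀ u y ym yp φ hy hyp hym hφ1 hφc hφroots hφode hu_le hu_lt hu_gt
  have hpt : ∀ᶠ q in 𝓝[{q : ℝ × ℝ | ¬ (1 ≤ q.1 ∧ q.2 = φ q.1)}] ((1 : ℝ), (0 : ℝ)),
      ∀ ρ, ρ = |q.1 - 1| ^ ((1 : ℝ) / (2 * (k : ℝ))) + |q.2| ^ ((1 : ℝ) / (2 * (k : ℝ) + 1)) →
        0 < ρ ∧ |u q.1 q.2 - u 1 0| ≤ 8 * L * ρ ∧
        |deriv (fun s => u s q.2) q.1|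
          ≤ 12 * ((2 * k : ℕ) + 1) * L * 16 * 6 ^ (2 * k) * (ρ * (ρ ^ (2 * k))⁻¹) ∧
        |deriv (fun y => u q.1 y) q.2|
          ≤ 12 * ((2 * k : ℕ) + 1) * L * 6 ^ (2 * k) * (ρ ^ (2 * k))⁻¹ := by
    filter_upwards [hev] with q ⟨ht1, ht2, z, hzη, hz, hzu, hpos, hdt, hdx⟩ ρ hρ
    set σ : ℝ := |q.1 - 1| ^ ((1 : ℝ) / (2 * (k : ℝ))) with hσ
    set X : ℝ := |q.2| ^ ((1 : ℝ) / (2 * (k : ℝ) + 1)) with hX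
    have hσ0 : 0 ≤ σ := Real.rpow_nonneg (abs_nonneg _) _
    have hX0 : 0 ≤ X := Real.rpow_nonneg (abs_nonneg _) _
    have hσn : σ ^ (2 * k) = |q.1 - 1| := by
      rw [hσ, one_div, show (2 * (k : ℝ)) = ((2 * k : ℕ) : ℝ) by push_cast; ring]
      exact Real.rpow_inv_natCast_pow (abs_nonneg _) hP.ne_zero
    have hXn : X ^ (2 * k + 1) = |q.2| := by
      rw [hX, one_div, show (2 * (k : ℝ) + 1) = ((2 * k + 1 : ℕ) : ℝ) by push_cast; ring]
      exact Real.rpow_inv_natCast_pow (abs_nonneg _) (Nat.succ_ne_zero _)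
    obtain ⟨hzρ, hρS⟩ := hP.abs_root_le_scale (by linarith) ht1 ht2 hσ0 hX0 hσn hXn hzη.le hz
    rw [← hρ] at hzρ hρS
    set S : ℝ := |q.1 - 1| + |z| ^ (2 * k) with hS
    have hρ0 : 0 < ρ := by
      have hρ0' : 0 ≤ ρ := by rw [hρ]; positivity
      refine hρ0'.lt_of_ne' fun h0 => hpos.ne' ?_
      have hz0 : |z| = 0 := le_antisymm (by linarith) (abs_nonneg z)
      have hσ00 : σ = 0 := by linarith
      rw [hS, hz0, ← hσn, hσ00, zero_pow hP.ne_zero, add_zero]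
    have hgz := hgε z hzη
    have hinv : 1 / S ≤ 6 ^ (2 * k) * (ρ ^ (2 * k))⁻¹ := by
      rw [← div_eq_mul_inv, div_le_div_iff₀ hpos (by positivity), one_mul]
      exact hρS
    refine ⟨hρ0, ?_, ?_, ?_⟩
    · rw [hzu, hu10]
      refine (hLip z hzη).trans ?_
      nlinarith
    · refine hdt.trans ?_
      calc 12 * ((2 * k : ℕ) + 1) * L * |g z| / S
          = 12 * ((2 * k : ℕ) + 1) * L * |g z| * (1 / S) := by ring
        _ ≤ 12 * ((2 * k : ℕ) + 1) * L * (2 * (8 * ρ)) * (6 ^ (2 * k) * (ρ ^ (2 * k))⁻¹) := by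
            gcongr
            linarith
        _ = _ := by ring
    · refine hdx.trans ?_
      calc 12 * ((2 * k : ℕ) + 1) * L / S = 12 * ((2 * k : ℕ) + 1) * L * (1 / S) := by ring
        _ ≤ 12 * ((2 * k : ℕ) + 1) * L * (6 ^ (2 * k) * (ρ ^ (2 * k))⁻¹) := by gcongr
        _ = _ := by ring
  have hcast : ∀ ρ : ℝ, 0 < ρ → ρ ^ (-(2 * (k : ℝ))) = (ρ ^ (2 * k))⁻¹ := by
    intro ρ hρ
    rw [Real.rpow_neg hρ.le, ← Real.rpow_natCast]
    push_cast
    rfl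
  refine ⟨IsBigO.of_bound (8 * L) ?_,
    IsBigO.of_bound (12 * ((2 * k : ℕ) + 1) * L * 16 * 6 ^ (2 * k)) ?_,
    IsBigO.of_bound (12 * ((2 * k : ℕ) + 1) * L * 6 ^ (2 * k)) ?_⟩
  · filter_upwards [hpt] with q hq
    obtain ⟨hρ, h1, -, -⟩ := hq _ rfl
    rwa [Real.norm_eq_abs, Real.norm_eq_abs, abs_of_pos hρ]
  · filter_upwards [hpt] with q hq
    obtain ⟨hρ, -, h2, -⟩ := hq _ rfl
    rw [Real.norm_eq_abs, Real.norm_eq_abs, abs_of_pos (Real.rpow_pos_of_pos hρ _),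
      show -(2 * (k : ℝ) - 1) = 1 + -(2 * (k : ℝ)) by ring, Real.rpow_add hρ, Real.rpow_one,
      hcast _ hρ]
    exact h2
  · filter_upwards [hpt] with q hq
    obtain ⟨hρ, -, -, h3⟩ := hq _ rfl
    rw [Real.norm_eq_abs, Real.norm_eq_abs, abs_of_pos (Real.rpow_pos_of_pos hρ _), hcast _ hρ]
    exact h3
end

section
/- Under assumption (A_k), there exists ε > 0 sufficiently small such that the root functions η_± belong to C^{2k+1}((1,1+ε)) ∩ C^{1/(2k)}([1,1+ε)) (Hölder continuous with exponent 1/(2k) up to t = 1) and admit, as t → 1+, the expansions η_±(t) = ±(2k+1)^{−1/(2k)}(t−1)^{1/(2k)} − (g^{(2k+2)}(0)/(2k·(2k)!))·(2k+1)^{−(2k+1)/k}·(t−1)^{1/k} + o((t−1)^{1/k}). -/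
open Real Filter Topology Set Asymptotics

lemma sub_rpow_inv_isLittleO {n : ℕ} (hn : n ≠ 0) {A B : ℝ} (hA : 0 < A) {φ : ℝ → ℝ}
    (hφ : (fun y => φ y - A * y ^ n - B * y ^ (n + 1)) =o[𝓝[>] 0] fun y => y ^ (n + 1)) :
    (fun y => y - A ^ (-(1 : ℝ) / n) * φ y ^ ((1 : ℝ) / n)
        + B / (n * A) * (A ^ (-(1 : ℝ) / n) * φ y ^ ((1 : ℝ) / n)) ^ 2)
      =o[𝓝[>] 0] fun y => (φ y ^ ((1 : ℝ) / n)) ^ 2 := by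
  have hn' : (n : ℝ) ≠ 0 := Nat.cast_ne_zero.2 hn
  have hpos : ∀ᶠ y : ℝ in 𝓝[>] 0, 0 < y := eventually_mem_nhdsWithin
  have hid : Tendsto (fun y : ℝ => y) (𝓝[>] 0) (𝓝 0) := tendsto_id.mono_left nhdsWithin_le_nhds
  set q : ℝ → ℝ := fun y => φ y / (A * y ^ n) with hq
  have hslope : Tendsto (fun y => (q y - 1) / y) (𝓝[>] 0) (𝓝 (B / A)) := by
    have h := (hφ.tendsto_div_nhds_zero.div_const A).add_const (B / A)
    rw [zero_div, zero_add] at h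
    refine h.congr' ?_
    filter_upwards [hpos] with y hy
    simp only [hq]
    field_simp
    ring
  have hq1 : Tendsto q (𝓝[>] 0) (𝓝 1) := by
    have h := (hid.mul hslope).add_const 1
    rw [zero_mul, zero_add] at h
    refine h.congr' ?_
    filter_upwards [hpos] with y hy
    field_simp
    ring
  have hO : (fun y => q y - 1) =O[𝓝[>] 0] fun y => y :=
    isBigO_of_div_tendsto_nhds (hpos.mono fun y hy h => absurd h hy.ne') _ hslope
  have hder : HasDerivAt (fun x : ℝ => x ^ ((1 : ℝ) / n)) ((1 : ℝ) / n) 1 := by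
    simpa using Real.hasDerivAt_rpow_const (x := 1) (p := (1 : ℝ) / n) (Or.inl one_ne_zero)
  have hlit : (fun y => q y ^ ((1 : ℝ) / n) - 1 - (q y - 1) * (1 / n)) =o[𝓝[>] 0] fun y => y := by
    have h := (hasDerivAt_iff_isLittleO.1 hder).comp_tendsto hq1
    simpa [Function.comp_def] using h.trans_isBigO hO
  have hu : Tendsto (fun y => (q y ^ ((1 : ℝ) / n) - 1) / y) (𝓝[>] 0) (𝓝 (B / (n * A))) := by
    have h := hlit.tendsto_div_nhds_zero.add (hslope.mul_const (1 / (n : ℝ)))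
    have e : 0 + B / A * (1 / (n : ℝ)) = B / (n * A) := by field_simp; ring
    rw [e] at h
    refine h.congr fun y => ?_
    ring
  have hu1 : Tendsto (fun y => q y ^ ((1 : ℝ) / n)) (𝓝[>] 0) (𝓝 1) := by
    simpa using hq1.rpow_const (p := (1 : ℝ) / n) (Or.inl one_ne_zero)
  have hroot : ∀ᶠ y in 𝓝[>] (0 : ℝ), 0 < q y ∧
      φ y ^ ((1 : ℝ) / n) = A ^ ((1 : ℝ) / n) * (y * q y ^ ((1 : ℝ) / n)) := by
    filter_upwards [hpos, hq1.eventually (lt_mem_nhds one_pos)] with y hy hqy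
    refine ⟨hqy, ?_⟩
    have e : φ y = A * (y ^ n * q y) := by simp only [hq]; field_simp
    rw [e, Real.mul_rpow hA.le (by positivity), Real.mul_rpow (by positivity) hqy.le, one_div,
      Real.pow_rpow_inv_natCast hy.le hn]
  have hc : A ^ (-(1 : ℝ) / n) * A ^ ((1 : ℝ) / n) = 1 := by
    rw [← Real.rpow_add hA, neg_div, neg_add_cancel, Real.rpow_zero]
  have hcpos : 0 < A ^ ((1 : ℝ) / n) := Real.rpow_pos_of_pos hA _
  refine isLittleO_of_tendsto' ?_ ?_
  · filter_upwards [hpos, hroot] with y hy ⟨hqy, e⟩ h0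
    rw [e] at h0
    have : 0 < q y ^ ((1 : ℝ) / n) := Real.rpow_pos_of_pos hqy _
    exact absurd h0 (by positivity)
  · have h := ((hu.neg.div (hu1.pow 2) (by norm_num)).add_const (B / (n * A))).div_const
      ((A ^ ((1 : ℝ) / n)) ^ 2)
    have e0 : (-(B / (n * A)) / 1 ^ 2 + B / (n * A)) / (A ^ ((1 : ℝ) / n)) ^ 2 = 0 := by
      rw [one_pow, div_one, neg_add_cancel, zero_div]
    rw [e0] at h
    refine h.congr' ?_
    filter_upwards [hpos, hroot] with y hy ⟨hqy, e⟩
    have hup : 0 < q y ^ ((1 : ℝ) / n) := Real.rpow_pos_of_pos hqy _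
    rw [e, ← mul_assoc, hc, one_mul]
    simp only [Pi.div_apply]
    generalize q y ^ ((1 : ℝ) / n) = u at *
    generalize A ^ ((1 : ℝ) / n) = c at *
    field_simp
    ring

lemma pow_sub_le_sub_of_le_deriv {n : ℕ} (hn : n ≠ 0) {h : ℝ → ℝ} (hh : Differentiable ℝ h) {δ : ℝ}
    (hd : ∀ y ∈ Ioo 0 δ, n * y ^ (n - 1) ≤ deriv h y) {x y : ℝ} (hx : 0 ≤ x) (hxy : x ≤ y)
    (hy : y < δ) : (y - x) ^ n ≤ h y - h x := by
  have hmono : MonotoneOn (fun z => h z - z ^ n) (Ico 0 δ) := by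
    have hcont := hh.continuous
    refine monotoneOn_of_deriv_nonneg (convex_Ico 0 δ) (by fun_prop) (by fun_prop) fun z hz => ?_
    rw [interior_Ico] at hz
    have := hd z hz
    rw [deriv_fun_sub (hh z) (by fun_prop)]
    simpa using this
  have h1 := hmono ⟨hx, hxy.trans_lt hy⟩ ⟨hx.trans hxy, hy⟩ hxy
  have h2 := pow_add_pow_le (sub_nonneg.2 hxy) hx hn
  rw [sub_add_cancel] at h2
  simp only at h1
  linarith

lemma ContDiffAt.of_comp {n : WithTop ℕ∞} (hn : n ≠ 0) {h η : ℝ → ℝ} {t : ℝ}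
    (hh : ContDiffAt ℝ n h (η t)) (hd : deriv h (η t) ≠ 0) (hη : ContinuousAt η t)
    (hc : ContDiffAt ℝ n (fun s => h (η s)) t) : ContDiffAt ℝ n η t := by
  have hF := (hh.differentiableAt hn).hasDerivAt.hasFDerivAt_equiv hd
  have hinv := hh.to_localInverse hF hn
  refine (hinv.comp t hc).congr_of_eventuallyEq ?_
  have hleft := (hh.hasStrictFDerivAt' hF hn).eventually_left_inverse
  filter_upwards [hη.eventually hleft] with s hs
  exact hs.symm

lemma neg_one_add_div_isLittleO {n : ℕ} (hn : 2 ≤ n) {A B : ℝ} {h : ℝ → ℝ}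
    (hexp : (fun y => h y + 1 - A * y ^ n - B * y ^ (n + 1)) =o[𝓝 0] fun y => y ^ (n + 1)) :
    (fun y => -(1 + h y) / h y - A * y ^ n - B * y ^ (n + 1)) =o[𝓝 0] fun y => y ^ (n + 1) := by
  have hpow : (fun y : ℝ => y ^ (n + 1)) =O[𝓝 0] fun y => y ^ n :=
    (isLittleO_pow_pow n.lt_succ_self).isBigO
  have hO : (fun y => h y + 1) =O[𝓝 0] fun y => y ^ n := by
    have h1 := hexp.isBigO.trans hpow
    have h2 := (isBigO_refl (fun y : ℝ => y ^ n) (𝓝 0)).const_mul_left A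
    have h3 := hpow.const_mul_left B
    refine ((h1.add h2).add h3).congr_left fun y => ?_
    ring
  have hlim : Tendsto h (𝓝 0) (𝓝 (-1)) := by
    have h0 : Tendsto (fun y : ℝ => y ^ n) (𝓝 0) (𝓝 0) := by
      simpa [show n ≠ 0 by omega] using (continuous_pow (M := ℝ) n).tendsto 0
    simpa using (hO.trans_tendsto h0).sub_const 1
  have hinv : (fun y => -(h y)⁻¹) =O[𝓝 0] fun _ => (1 : ℝ) :=
    (hlim.inv₀ (by norm_num)).neg.isBigO_one ℝ
  have hsq : (fun y => (h y + 1) * (h y + 1) * -(h y)⁻¹) =o[𝓝 0] fun y => y ^ (n + 1) := by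
    have h1 := (hO.mul hO).mul hinv
    refine (h1.congr_right (g₂ := fun y : ℝ => y ^ (n + n)) fun y => by ring).trans_isLittleO ?_
    exact isLittleO_pow_pow (by omega)
  refine (hexp.add hsq).congr' ?_ EventuallyEq.rfl
  filter_upwards [hlim.eventually_ne (show (-1 : ℝ) ≠ 0 by norm_num)] with y hy
  field_simp
  ring

/-- Regularity, Hölder continuity and expansion of a positive branch of roots of `1 + t h(y) = 0`
bifurcating from `y = 0` at `t = 1`. -/
lemma positive_branch {n : ℕ} (hn : 2 ≤ n) {A B δ ε : ℝ} (hA : 0 < A) (hε : 0 < ε)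
    {h η : ℝ → ℝ} (hh : ContDiff ℝ (n + 1 : ℕ) h)
    (hexp : (fun y => h y + 1 - A * y ^ n - B * y ^ (n + 1)) =o[𝓝 0] fun y => y ^ (n + 1))
    (hd : ∀ y ∈ Ioo 0 δ, n * y ^ (n - 1) ≤ deriv h y)
    (hη : ∀ t ∈ Ioo 1 (1 + ε), η t ∈ Ioo 0 δ) (hroot : ∀ t ∈ Ioo 1 (1 + ε), 1 + t * h (η t) = 0)
    (hlim : Tendsto η (𝓝[>] 1) (𝓝 0)) :
    ContDiffOn ℝ (n + 1 : ℕ) η (Ioo 1 (1 + ε)) ∧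
    (∀ t₁ ∈ Ioo 1 (1 + ε), ∀ t₂ ∈ Ioo 1 (1 + ε),
      |η t₁ - η t₂| ≤ |t₁ - t₂| ^ ((1 : ℝ) / n)) ∧
    (fun t => η t - A ^ (-(1 : ℝ) / n) * (t - 1) ^ ((1 : ℝ) / n)
        + B / (n * A) * (A ^ (-(1 : ℝ) / n) * (t - 1) ^ ((1 : ℝ) / n)) ^ 2)
      =o[𝓝[>] 1] fun t => ((t - 1) ^ ((1 : ℝ) / n)) ^ 2 := by
  have hn0 : n ≠ 0 := by omega
  have hdiff : Differentiable ℝ h := hh.differentiable (by norm_num)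
  have hval : ∀ t ∈ Ioo 1 (1 + ε), h (η t) = -t⁻¹ := fun t ht => by
    have h0 : t ≠ 0 := by linarith [ht.1]
    have := hroot t ht
    field_simp
    linarith
  have hhol : ∀ t₁ ∈ Ioo 1 (1 + ε), ∀ t₂ ∈ Ioo 1 (1 + ε),
      |η t₁ - η t₂| ≤ |t₁ - t₂| ^ ((1 : ℝ) / n) := by
    have key : ∀ t₁ ∈ Ioo 1 (1 + ε), ∀ t₂ ∈ Ioo 1 (1 + ε), η t₁ ≤ η t₂ →
        |η t₁ - η t₂| ≤ |t₁ - t₂| ^ ((1 : ℝ) / n) := by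
      intro t₁ h₁ t₂ h₂ hle
      have hp := pow_sub_le_sub_of_le_deriv hn0 hdiff hd (hη t₁ h₁).1.le hle (hη t₂ h₂).2
      rw [hval t₁ h₁, hval t₂ h₂] at hp
      have hb : -t₂⁻¹ - -t₁⁻¹ ≤ |t₁ - t₂| := by
        have a₁ : 1 < t₁ := h₁.1
        have a₂ : 1 < t₂ := h₂.1
        have e : -t₂⁻¹ - -t₁⁻¹ = (t₂ - t₁) / (t₁ * t₂) := by field_simp; ring
        rw [e, div_le_iff₀ (by positivity)]
        have hm : 1 ≤ t₁ * t₂ := by nlinarith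
        calc t₂ - t₁ ≤ |t₁ - t₂| := by rw [abs_sub_comm]; exact le_abs_self _
          _ ≤ |t₁ - t₂| * (t₁ * t₂) := le_mul_of_one_le_right (abs_nonneg _) hm
      rw [abs_sub_comm, abs_of_nonneg (sub_nonneg.2 hle), one_div,
        Real.le_rpow_inv_iff_of_pos (sub_nonneg.2 hle) (abs_nonneg _)
          (by positivity : (0 : ℝ) < n), Real.rpow_natCast]
      exact hp.trans hb
    intro t₁ h₁ t₂ h₂
    rcases le_total (η t₁) (η t₂) with hle | hle
    · exact key t₁ h₁ t₂ h₂ hle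
    · rw [abs_sub_comm, abs_sub_comm t₁]
      exact key t₂ h₂ t₁ h₁ hle
  have hcont : ∀ t ∈ Ioo 1 (1 + ε), ContinuousAt η t := fun t ht => by
    have hz : Tendsto (fun s => |s - t| ^ ((1 : ℝ) / n)) (𝓝 t) (𝓝 0) := by
      have hc : Continuous fun s : ℝ => |s - t| ^ ((1 : ℝ) / n) :=
        (by fun_prop : Continuous fun s : ℝ => |s - t|).rpow_const fun _ => Or.inr (by positivity)
      have := hc.tendsto t
      rwa [sub_self, abs_zero, Real.zero_rpow (by positivity)] at this
    refine tendsto_iff_norm_sub_tendsto_zero.2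
      (squeeze_zero' (Eventually.of_forall fun _ => norm_nonneg _) ?_ hz)
    filter_upwards [isOpen_Ioo.mem_nhds ht] with s hs using hhol s hs t ht
  refine ⟨fun t ht => ContDiffAt.contDiffWithinAt ?_, hhol, ?_⟩
  · have hpos := hη t ht
    have hd' : 0 < deriv h (η t) := by
      have h1 := hd _ hpos
      have h2 : 0 < (n : ℝ) * η t ^ (n - 1) := by
        have := hpos.1
        positivity
      linarith
    refine ContDiffAt.of_comp (by norm_num) hh.contDiffAt hd'.ne' (hcont t ht) ?_
    have hc : ContDiffAt ℝ (n + 1 : ℕ) (fun s : ℝ => -s⁻¹) t :=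
      (contDiffAt_inv ℝ (by linarith [ht.1])).neg
    refine hc.congr_of_eventuallyEq ?_
    filter_upwards [isOpen_Ioo.mem_nhds ht] with s hs using hval s hs
  · have hmem : ∀ᶠ t in 𝓝[>] (1 : ℝ), t ∈ Ioo 1 (1 + ε) :=
      Ioo_mem_nhdsGT (by linarith)
    have hlim' : Tendsto η (𝓝[>] 1) (𝓝[>] 0) :=
      tendsto_nhdsWithin_iff.2 ⟨hlim, hmem.mono fun t ht => (hη t ht).1⟩
    have hφ := (neg_one_add_div_isLittleO hn hexp).mono (nhdsWithin_le_nhds (s := Ioi 0))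
    have hfin := (sub_rpow_inv_isLittleO hn0 hA hφ).comp_tendsto hlim'
    have hs : ∀ t ∈ Ioo 1 (1 + ε), -(1 + h (η t)) / h (η t) = t - 1 := fun t ht => by
      have h0 : t ≠ 0 := by linarith [ht.1]
      rw [hval t ht]
      field_simp
      ring
    refine hfin.congr' ?_ ?_ <;>
    · filter_upwards [hmem] with t ht
      simp only [Function.comp_apply, hs t ht]

lemma taylor_isLittleO_of_iteratedDeriv_eq_zero {f : ℝ → ℝ} {m : ℕ} (hf : ContDiff ℝ m f)
    (h0 : ∀ j < m, iteratedDeriv j f 0 = 0) :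
    (fun y => f y - iteratedDeriv m f 0 / m.factorial * y ^ m) =o[𝓝 0] fun y => y ^ m := by
  have h := taylor_isLittleO_univ (x₀ := 0) hf
  simp only [taylor_within_apply, iteratedDerivWithin_univ, sub_zero, smul_eq_mul] at h
  refine h.congr_left fun y => ?_
  rw [Finset.sum_range_succ, Finset.sum_eq_zero fun j hj => by
    rw [h0 j (Finset.mem_range.1 hj), mul_zero]]
  ring

lemma AssumptionA.deriv_isLittleO {k : ℕ} {g : ℝ → ℝ} (hA : AssumptionA k g) :
    (fun y => deriv g y + 1 - (2 * k + 1 : ℝ) * y ^ (2 * k)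
        - iteratedDeriv (2 * k + 2) g 0 / (2 * k + 1).factorial * y ^ (2 * k + 1))
      =o[𝓝 0] fun y => y ^ (2 * k + 1) := by
  obtain ⟨-, -, -, -, -, r, hr, hgr, hO⟩ := hA
  have hrd : Differentiable ℝ r := hr.differentiable (by norm_num)
  have hr' : ContDiff ℝ (2 * k + 1 : ℕ) (deriv r) := by
    have : ContDiff ℝ ((2 * k + 1 : ℕ) + 1 : WithTop ℕ∞) r := by exact_mod_cast hr
    exact (contDiff_succ_iff_deriv.1 this).2.2
  have hzero : ∀ j < 2 * k + 1, iteratedDeriv j (deriv r) 0 = 0 := fun j hj => by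
    rw [← iteratedDeriv_succ']
    exact (hO (j + 1) (by omega)).eq_zero_imp.self_of_nhds (zero_pow (by omega))
  have hG : iteratedDeriv (2 * k + 2) g 0 = iteratedDeriv (2 * k + 1) (deriv r) 0 := by
    rw [← iteratedDeriv_succ', Filter.EventuallyEq.iteratedDeriv_eq _ hgr,
      iteratedDeriv_fun_add (by fun_prop) hr.contDiffAt,
      iteratedDeriv_fun_add (by fun_prop) (by fun_prop), iteratedDeriv_fun_pow_zero,
      if_neg (by omega), iteratedDeriv_fun_neg]
    have h1 := iteratedDeriv_fun_pow_zero (𝕜 := ℝ) (n := 2 * k + 2) (m := 1)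
    rw [if_neg (by omega)] at h1
    simp only [pow_one] at h1
    rw [h1]
    ring
  have hT := taylor_isLittleO_of_iteratedDeriv_eq_zero hr' hzero
  rw [← hG] at hT
  refine hT.congr' ?_ EventuallyEq.rfl
  filter_upwards [EventuallyEq.deriv hgr] with y hy
  rw [hy, deriv_fun_add (by fun_prop) (hrd y), deriv_fun_add (by fun_prop) (by fun_prop)]
  simp
  ring

lemma AssumptionA.deriv_deriv_isLittleO {k : ℕ} {g : ℝ → ℝ} (hA : AssumptionA k g) :
    (fun y => deriv (deriv g) y - (2 * k + 1 : ℝ) * (2 * k) * y ^ (2 * k - 1))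
      =o[𝓝 0] fun y => y ^ (2 * k - 1) := by
  obtain ⟨hk, -, -, -, -, r, hr, hgr, hO⟩ := hA
  have hrd : Differentiable ℝ r := hr.differentiable (by norm_num)
  have hr' : Differentiable ℝ (deriv r) := by
    have : ContDiff ℝ ((2 * k + 1 : ℕ) + 1 : WithTop ℕ∞) r := by exact_mod_cast hr
    exact (contDiff_succ_iff_deriv.1 this).2.2.differentiable (by norm_num)
  have hlit := (hO 2 (by omega)).trans_isLittleO
    (isLittleO_pow_pow (show 2 * k - 1 < 2 * k + 2 - 2 by omega))
  refine hlit.congr' ?_ EventuallyEq.rfl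
  have hd : deriv g =ᶠ[𝓝 0] fun y => -1 + (2 * k + 1 : ℝ) * y ^ (2 * k) + deriv r y := by
    filter_upwards [EventuallyEq.deriv hgr] with y hy
    rw [hy, deriv_fun_add (by fun_prop) (hrd y), deriv_fun_add (by fun_prop) (by fun_prop)]
    simp
  filter_upwards [hd.deriv] with y hy
  rw [hy, deriv_fun_add (by fun_prop) (hr' y), deriv_fun_add (by fun_prop) (by fun_prop),
    iteratedDeriv_succ, iteratedDeriv_one]
  simp
  ring

/-- Quantitative strict monotonicity of the derivative of `g` on either side of `0`. -/
lemma AssumptionA.exists_le_deriv_deriv {k : ℕ} {g : ℝ → ℝ} (hA : AssumptionA k g) :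
    ∃ δ > 0, (∀ y ∈ Ioo 0 δ, ((2 * k : ℕ) : ℝ) * y ^ (2 * k - 1) ≤ deriv (deriv g) y) ∧
      ∀ y ∈ Ioo 0 δ, ((2 * k : ℕ) : ℝ) * y ^ (2 * k - 1) ≤ deriv (fun z => deriv g (-z)) y := by
  have hk : 1 ≤ k := hA.1
  have hk' : (1 : ℝ) ≤ k := by exact_mod_cast hk
  obtain ⟨δ, hδ, h⟩ := Metric.eventually_nhds_iff.1 (hA.deriv_deriv_isLittleO.def one_pos)
  have hodd : Odd (2 * k - 1) := ⟨k - 1, by omega⟩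
  have hcoef : ((2 * k : ℕ) : ℝ) ≤ (2 * k + 1 : ℝ) * (2 * k) - 1 := by
    push_cast
    nlinarith
  refine ⟨δ, hδ, fun y hy => ?_, fun y hy => ?_⟩
  · have hp : 0 < y ^ (2 * k - 1) := pow_pos hy.1 _
    have h1 := h (y := y) (by rw [Real.dist_eq, sub_zero, abs_of_pos hy.1]; exact hy.2)
    rw [one_mul, Real.norm_eq_abs, Real.norm_eq_abs, abs_of_pos hp, abs_le] at h1
    have h2 := mul_le_mul_of_nonneg_right hcoef hp.le
    linarith [h1.1]
  · have hp : 0 < y ^ (2 * k - 1) := pow_pos hy.1 _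
    have h1 := h (y := -y) (by rw [Real.dist_eq, sub_zero, abs_neg, abs_of_pos hy.1]; exact hy.2)
    rw [hodd.neg_pow, one_mul, Real.norm_eq_abs, Real.norm_eq_abs, abs_neg, abs_of_pos hp,
      abs_le] at h1
    have h2 := mul_le_mul_of_nonneg_right hcoef hp.le
    rw [deriv_comp_neg]
    linarith [h1.2]

lemma AssumptionA.deriv_comp_neg_isLittleO {k : ℕ} {g : ℝ → ℝ} (hA : AssumptionA k g) :
    (fun y => deriv g (-y) + 1 - (2 * k + 1 : ℝ) * y ^ (2 * k)
        - -(iteratedDeriv (2 * k + 2) g 0 / (2 * k + 1).factorial) * y ^ (2 * k + 1))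
      =o[𝓝 0] fun y => y ^ (2 * k + 1) := by
  have hneg : Tendsto (fun y : ℝ => -y) (𝓝 0) (𝓝 0) := by
    simpa using (continuous_neg (G := ℝ)).tendsto 0
  have h := (hA.deriv_isLittleO.comp_tendsto hneg).neg_right
  have he : Even (2 * k) := even_two_mul k
  have ho : Odd (2 * k + 1) := he.add_one
  refine h.congr (fun y => ?_) fun y => ?_
  · simp only [Function.comp_apply, he.neg_pow, ho.neg_pow]
    ring
  · simp only [Function.comp_apply, ho.neg_pow, neg_neg]

lemma AssumptionA.contDiff_deriv {k : ℕ} {g : ℝ → ℝ} (hA : AssumptionA k g) :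
    ContDiff ℝ (2 * k + 1 : ℕ) (deriv g) := by
  have : ContDiff ℝ ((2 * k + 1 : ℕ) + 1 : WithTop ℕ∞) g := by exact_mod_cast hA.2.1
  exact (contDiff_succ_iff_deriv.1 this).2.2

lemma sq_rpow_one_div_two_mul {k : ℕ} (hk : k ≠ 0) {s : ℝ} (hs : 0 ≤ s) :
    (s ^ ((1 : ℝ) / (2 * k : ℕ))) ^ 2 = s ^ ((1 : ℝ) / (k : ℝ)) := by
  have hk' : (k : ℝ) ≠ 0 := Nat.cast_ne_zero.2 hk
  rw [← Real.rpow_mul_natCast hs]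
  congr 1
  push_cast
  field_simp

lemma second_coefficient_eq {k : ℕ} (hk : k ≠ 0) (G : ℝ) {s : ℝ} (hs : 0 ≤ s) :
    G / (2 * k + 1).factorial / ((2 * k : ℕ) * (2 * k + 1))
        * ((2 * k + 1 : ℝ) ^ (-(1 : ℝ) / (2 * k : ℕ)) * s ^ ((1 : ℝ) / (2 * k : ℕ))) ^ 2
      = G / (2 * (k : ℝ) * (Nat.factorial (2 * k) : ℝ))
        * (2 * (k : ℝ) + 1) ^ (-(2 * (k : ℝ) + 1) / (k : ℝ)) * s ^ ((1 : ℝ) / (k : ℝ)) := by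
  have hA : (0 : ℝ) < 2 * k + 1 := by positivity
  have hk' : (k : ℝ) ≠ 0 := Nat.cast_ne_zero.2 hk
  have h2 : (2 * (k : ℝ) + 1) ^ (-(2 * (k : ℝ) + 1) / (k : ℝ))
      = ((2 * k + 1 : ℝ) ^ (-(1 : ℝ) / (2 * k : ℕ))) ^ 2 / (2 * k + 1) ^ 2 := by
    rw [← Real.rpow_mul_natCast hA.le, ← Real.rpow_natCast (2 * (k : ℝ) + 1) 2,
      ← Real.rpow_sub hA]
    congr 1
    push_cast
    field_simp
    ring
  rw [mul_pow, sq_rpow_one_div_two_mul hk hs, h2, Nat.factorial_succ]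
  push_cast
  have := Nat.factorial_pos (2 * k)
  field_simp

/-- Under assumption (A_k), the two root functions `η₋(t) < η₊(t)` of `1 + t g'(y) = 0`
near `y = 0` (for `t > 1` close to `1`) are `C^{2k+1}` in `(1, 1+ε)`, Hölder continuous of
exponent `1/(2k)`, and admit the expansions
`η₊(t) = (2k+1)^{-1/(2k)} (t-1)^{1/(2k)} - (g^{(2k+2)}(0)/(2k (2k)!)) (2k+1)^{-(2k+1)/k} (t-1)^{1/k} + o((t-1)^{1/k})`,
`η₋(t) = -(2k+1)^{-1/(2k)} (t-1)^{1/(2k)} - (g^{(2k+2)}(0)/(2k (2k)!)) (2k+1)^{-(2k+1)/k} (t-1)^{1/k} + o((t-1)^{1/k})`. -/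
theorem statement4 (k : ℕ) (g : ℝ → ℝ) (hA : AssumptionA k g)
    (ε₀ δ₀ : ℝ) (hε₀ : 0 < ε₀) (hδ₀ : 0 < δ₀)
    (ηm ηp : ℝ → ℝ)
    (hlt : ∀ t ∈ Ioo (1 : ℝ) (1 + ε₀), ηm t < ηp t)
    (hroots : ∀ t ∈ Ioo (1 : ℝ) (1 + ε₀), ∀ z : ℝ, |z| < δ₀ →
      (1 + t * deriv g z = 0 ↔ z = ηm t ∨ z = ηp t))
    (hsm : Tendsto ηm (𝓝[>] (1 : ℝ)) (𝓝 0))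
    (hsp : Tendsto ηp (𝓝[>] (1 : ℝ)) (𝓝 0)) :
    ∃ ε : ℝ, 0 < ε ∧ ε ≤ ε₀ ∧
      ContDiffOn ℝ (2 * k + 1 : ℕ) ηp (Ioo 1 (1 + ε)) ∧
      ContDiffOn ℝ (2 * k + 1 : ℕ) ηm (Ioo 1 (1 + ε)) ∧
      (∃ C : ℝ, ∀ t₁ ∈ Ioo (1 : ℝ) (1 + ε), ∀ t₂ ∈ Ioo (1 : ℝ) (1 + ε),
        |ηp t₁ - ηp t₂| ≤ C * |t₁ - t₂| ^ ((1 : ℝ) / (2 * (k : ℝ))) ∧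
        |ηm t₁ - ηm t₂| ≤ C * |t₁ - t₂| ^ ((1 : ℝ) / (2 * (k : ℝ)))) ∧
      (fun t => ηp t - (2 * (k : ℝ) + 1) ^ (-(1 : ℝ) / (2 * (k : ℝ))) * (t - 1) ^ ((1 : ℝ) / (2 * (k : ℝ)))
          + iteratedDeriv (2 * k + 2) g 0 / (2 * (k : ℝ) * (Nat.factorial (2 * k) : ℝ))
            * (2 * (k : ℝ) + 1) ^ (-(2 * (k : ℝ) + 1) / (k : ℝ)) * (t - 1) ^ ((1 : ℝ) / (k : ℝ)))
        =o[𝓝[>] (1 : ℝ)] (fun t => (t - 1) ^ ((1 : ℝ) / (k : ℝ))) ∧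
      (fun t => ηm t + (2 * (k : ℝ) + 1) ^ (-(1 : ℝ) / (2 * (k : ℝ))) * (t - 1) ^ ((1 : ℝ) / (2 * (k : ℝ)))
          + iteratedDeriv (2 * k + 2) g 0 / (2 * (k : ℝ) * (Nat.factorial (2 * k) : ℝ))
            * (2 * (k : ℝ) + 1) ^ (-(2 * (k : ℝ) + 1) / (k : ℝ)) * (t - 1) ^ ((1 : ℝ) / (k : ℝ)))
        =o[𝓝[>] (1 : ℝ)] (fun t => (t - 1) ^ ((1 : ℝ) / (k : ℝ))) := by
  have hk : 1 ≤ k := hA.1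
  obtain ⟨δ, hδ, hdp, hdm⟩ := hA.exists_le_deriv_deriv
  have hcd := hA.contDiff_deriv
  have hcdm : ContDiff ℝ (2 * k + 1 : ℕ) fun y => deriv g (-y) := hcd.comp contDiff_neg
  have hball : Metric.ball (0 : ℝ) (min δ δ₀) ∈ 𝓝 (0 : ℝ) :=
    Metric.ball_mem_nhds _ (lt_min hδ hδ₀)
  obtain ⟨u, hu, hsub⟩ := mem_nhdsGT_iff_exists_Ioo_subset.1
    ((hsm.eventually hball).and (hsp.eventually hball))
  have hu' : 1 < u := hu
  have hε : 0 < min ε₀ (u - 1) := lt_min hε₀ (by linarith)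
  have hsmall : ∀ t ∈ Ioo 1 (1 + min ε₀ (u - 1)),
      t ∈ Ioo 1 (1 + ε₀) ∧ |ηm t| < min δ δ₀ ∧ |ηp t| < min δ δ₀ := fun t ht => by
    have h1 := min_le_left ε₀ (u - 1)
    have h2 := min_le_right ε₀ (u - 1)
    have h3 : t ∈ Ioo 1 u := ⟨ht.1, by linarith [ht.2]⟩
    have h4 := hsub h3
    exact ⟨⟨ht.1, by linarith [ht.2]⟩, mem_ball_zero_iff.1 h4.1, mem_ball_zero_iff.1 h4.2⟩
  generalize hεdef : min ε₀ (u - 1) = ε at hε hsmall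
  have hroot : ∀ t ∈ Ioo 1 (1 + ε), 1 + t * deriv g (ηm t) = 0 ∧ 1 + t * deriv g (ηp t) = 0 := by
    intro t ht
    obtain ⟨ht₀, hm, hp⟩ := hsmall t ht
    exact ⟨(hroots t ht₀ _ (hm.trans_le (min_le_right _ _))).2 (Or.inl rfl),
      (hroots t ht₀ _ (hp.trans_le (min_le_right _ _))).2 (Or.inr rfl)⟩
  have hsign : ∀ t ∈ Ioo 1 (1 + ε), ηm t < 0 ∧ 0 < ηp t := by
    intro t ht
    obtain ⟨ht₀, hm, hp⟩ := hsmall t ht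
    obtain ⟨hrm, hrp⟩ := hroot t ht
    have hmp := hlt t ht₀
    have ht1 : 1 < t := ht.1
    have hne : ∀ z, 1 + t * deriv g z = 0 → z ≠ 0 := by
      rintro z hz rfl
      rw [hA.2.2.2.1] at hz
      linarith
    have heq : deriv g (ηm t) = deriv g (ηp t) :=
      mul_left_cancel₀ (show t ≠ 0 by linarith) (by linarith)
    have hpow := pow_pos (sub_pos.2 hmp) (2 * k)
    constructor
    · by_contra! hneg
      have h := pow_sub_le_sub_of_le_deriv (by omega) (hcd.differentiable (by norm_num)) hdp hneg
        hmp.le ((le_abs_self _).trans_lt (hp.trans_le (min_le_left _ _)))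
      rw [heq, sub_self] at h
      linarith
    · by_contra! hpos
      have h := pow_sub_le_sub_of_le_deriv (by omega) (hcdm.differentiable (by norm_num)) hdm
        (neg_nonneg.2 hpos) (neg_le_neg hmp.le)
        ((neg_le_abs _).trans_lt (hm.trans_le (min_le_left _ _)))
      rw [neg_neg, neg_neg, heq, sub_self, neg_sub_neg] at h
      linarith
  have hA0 : (0 : ℝ) < 2 * k + 1 := by positivity
  obtain ⟨hp1, hp2, hp3⟩ := positive_branch (n := 2 * k) (by omega) hA0 hε hcd
    hA.deriv_isLittleO hdp
    (fun t ht => ⟨(hsign t ht).2,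
      (le_abs_self _).trans_lt ((hsmall t ht).2.2.trans_le (min_le_left _ _))⟩)
    (fun t ht => (hroot t ht).2) hsp
  obtain ⟨hm1, hm2, hm3⟩ := positive_branch (n := 2 * k) (η := fun t => -ηm t) (by omega) hA0 hε
    hcdm hA.deriv_comp_neg_isLittleO hdm
    (fun t ht => ⟨neg_pos.2 (hsign t ht).1,
      (neg_le_abs _).trans_lt ((hsmall t ht).2.1.trans_le (min_le_left _ _))⟩)
    (fun t ht => by simpa using (hroot t ht).1) (by simpa using hsm.neg)
  have hgt : ∀ᶠ t in 𝓝[>] (1 : ℝ), 0 ≤ t - 1 := by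
    filter_upwards [self_mem_nhdsWithin] with t ht using sub_nonneg.2 (le_of_lt ht)
  refine ⟨ε, hε, hεdef ▸ min_le_left _ _, hp1, by simpa using hm1.neg,
    ⟨1, fun t₁ h₁ t₂ h₂ => ⟨?_, ?_⟩⟩, ?_, ?_⟩
  · simpa using hp2 t₁ h₁ t₂ h₂
  · have h := hm2 t₁ h₁ t₂ h₂
    rw [neg_sub_neg, abs_sub_comm] at h
    simpa using h
  · refine hp3.congr' ?_ (hgt.mono fun t ht => sq_rpow_one_div_two_mul (by omega) ht)
    filter_upwards [hgt] with t ht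
    rw [second_coefficient_eq (by omega) _ ht]
    push_cast
    rfl
  · refine hm3.neg_left.congr' ?_ (hgt.mono fun t ht => sq_rpow_one_div_two_mul (by omega) ht)
    filter_upwards [hgt] with t ht
    rw [← second_coefficient_eq (by omega) _ ht]
    push_cast
    ring
end
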